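/- arXiv:2201.10540 — 4 statements merged into one kernel-verified Lean document; each statement's English description precedes it below -/
import Mathlib

section
/- Let γ ∈ (0,2) and T > 0. Assume either γ ∈ (1,2) and G ∈ S_Rob, or γ ∈ (0,1] and G ∈ S_Neu. Then lim_{n→∞} [ (1/n) ∑_{x=1}^∞ sup_{s∈[0,T]} | n^γ ∑_{y=1}^∞ (G(s,y/n) − G(s,x/n)) p(y−x) − [−(−Δ)_{(0,∞)}^{γ/2}G](s, x/n) | + (1/n) ∑_{x=−∞}^{−1} sup_{s∈[0,T]} | n^γ ∑_{y=−∞}^{−1} (G(s,y/n) − G(s,x/n)) p(y−x) − [−(−Δ)_{(−∞,0)}^{γ/2}G](s, x/n) | + n^{γ−1} ∑_{y=1}^∞ sup_{s∈[0,T]} |G(s,y/n) − G(s,0)| p(y) ] = 0. -/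
open MeasureTheory Filter Set Topology

/-- Transition probability `p(z) = c⋅|z|^{-γ-1}` for `z ≠ 0`, `p(0)=0`. -/
noncomputable def transP (c γ : ℝ) (z : ℤ) : ℝ :=
  if z = 0 then 0 else c * |(z : ℝ)| ^ (-γ - 1)

/-- Truncated regional fractional Laplacian `[−(−Δ)_I^{γ/2}G]_ε(u)`. -/
noncomputable def regFracLapTrunc (c γ : ℝ) (I : Set ℝ) (G : ℝ → ℝ) (ε u : ℝ) : ℝ :=
  c * ∫ v in I ∩ {v : ℝ | ε ≤ |u - v|}, (G v - G u) / |u - v| ^ (γ + 1)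

/-- The regional fractional Laplacian `[−(−Δ)_I^{γ/2}G](u) = lim_{ε→0⁺} [...]_ε(u)`. -/
noncomputable def regFracLap (c γ : ℝ) (I : Set ℝ) (G : ℝ → ℝ) (u : ℝ) : ℝ :=
  limUnder (𝓝[>] (0 : ℝ)) (fun ε => regFracLapTrunc c γ I G ε u)

/-- `G ∈ S_Dif = P([0,T], C_c^∞(ℝ))`. -/
def SDifMem (G : ℝ → ℝ → ℝ) : Prop :=
  ∃ (k : ℕ) (a : ℕ → ℝ → ℝ),
    (∀ j : ℕ, ContDiff ℝ (⊤ : ℕ∞) (a j) ∧ HasCompactSupport (a j)) ∧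
    ∀ t u : ℝ, G t u = ∑ j ∈ Finset.range (k + 1), a j u * t ^ j

/-- `G ∈ S_Rob`. -/
def SRobMem (G : ℝ → ℝ → ℝ) : Prop :=
  ∃ Gm Gp : ℝ → ℝ → ℝ, SDifMem Gm ∧ SDifMem Gp ∧
    ∀ t u : ℝ, G t u = if u < 0 then Gm t u else Gp t u

/-- `G ∈ S_Neu`. -/
def SNeuMem (G : ℝ → ℝ → ℝ) : Prop :=
  ∃ (k : ℕ) (a : ℕ → ℝ → ℝ) (b : ℝ), 0 < b ∧
    (∀ j : ℕ, ContDiff ℝ (⊤ : ℕ∞) (a j) ∧ HasCompactSupport (a j) ∧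
      ∀ u : ℝ, |u| ≤ b → a j u = 0) ∧
    ∀ t u : ℝ, G t u = ∑ j ∈ Finset.range (k + 1), a j u * t ^ j

/-- Quantitative regularity used below: `F` is bounded, Lipschitz, has second differences of
order `w ^ 2`, and vanishes outside `[-R, R]`. -/
structure IsTame (F : ℝ → ℝ) (C R : ℝ) : Prop where
  cont : Continuous F
  C_nonneg : 0 ≤ C
  R_nonneg : 0 ≤ R
  bdd : ∀ x, |F x| ≤ C
  lip : ∀ x y, |F x - F y| ≤ C * |x - y|
  snd : ∀ x w, 0 ≤ w → |F (x + w) + F (x - w) - 2 * F x| ≤ C * w ^ 2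
  supp : ∀ x, R < |x| → F x = 0

lemma abs_second_difference_le {F : ℝ → ℝ} (hF : Differentiable ℝ F) {K : ℝ} (hK : 0 ≤ K)
    (hF' : ∀ x y, |deriv F x - deriv F y| ≤ K * |x - y|) (x : ℝ) {w : ℝ} (hw : 0 ≤ w) :
    |F (x + w) + F (x - w) - 2 * F x| ≤ 2 * K * w ^ 2 := by
  have hd : ∀ t ∈ Icc 0 w, HasDerivWithinAt (fun t => F (x + t) + F (x - t))
      (deriv F (x + t) - deriv F (x - t)) (Icc 0 w) t := by
    intro t _
    have h1 : HasDerivAt (fun t => F (x + t)) (deriv F (x + t)) t := by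
      simpa using (hF (x + t)).hasDerivAt.comp_const_add x t
    have h2 : HasDerivAt (fun t => F (x - t)) (-deriv F (x - t)) t := by
      simpa using (hF (x - t)).hasDerivAt.comp_const_sub x t
    rw [sub_eq_add_neg]
    exact (h1.add h2).hasDerivWithinAt
  have hb : ∀ t ∈ Icc 0 w, ‖deriv F (x + t) - deriv F (x - t)‖ ≤ 2 * K * w := by
    intro t ht
    refine (hF' _ _).trans ?_
    rw [show x + t - (x - t) = 2 * t by ring, abs_of_nonneg (by linarith [ht.1])]
    nlinarith [ht.2]
  have := (convex_Icc 0 w).norm_image_sub_le_of_norm_hasDerivWithin_le hd hb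
    (left_mem_Icc.2 hw) (right_mem_Icc.2 hw)
  simp only [add_zero, sub_zero, Real.norm_eq_abs, abs_of_nonneg hw] at this
  calc _ = |F (x + w) + F (x - w) - (F x + F x)| := by ring_nf
    _ ≤ _ := this
    _ = _ := by ring

lemma exists_isTame {F : ℝ → ℝ} (hF : ContDiff ℝ (⊤ : ℕ∞) F) (hs : HasCompactSupport F) :
    ∃ C R, IsTame F C R := by
  obtain ⟨B, hB⟩ := hs.exists_bound_of_continuous hF.continuous
  obtain ⟨K₁, hK₁⟩ := ContDiff.lipschitzWith_of_hasCompactSupport hs hF (by simp)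
  have hF' : ContDiff ℝ 1 (deriv F) :=
    ContDiff.iterate_deriv' 1 1 (contDiff_infty.1 hF 2)
  obtain ⟨K₂, hK₂⟩ := ContDiff.lipschitzWith_of_hasCompactSupport hs.deriv hF' (by simp)
  obtain ⟨R, hR⟩ := hs.isCompact.isBounded.exists_norm_le
  have hB0 : 0 ≤ B := (norm_nonneg _).trans (hB 0)
  have hK₁0 : (0 : ℝ) ≤ K₁ := K₁.2
  have hK₂0 : (0 : ℝ) ≤ K₂ := K₂.2
  refine ⟨B + K₁ + 2 * K₂, max R 0, hF.continuous, by positivity, le_max_right _ _, fun x => ?_,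
    fun x y => ?_, fun x w hw => ?_, fun x hx => ?_⟩
  · exact (hB x).trans (by linarith)
  · have := hK₁.dist_le_mul x y
    rw [Real.dist_eq, Real.dist_eq] at this
    exact this.trans (mul_le_mul_of_nonneg_right (by linarith) (abs_nonneg _))
  · have := abs_second_difference_le (hF.differentiable (by simp)) hK₂0
      (fun x y => by simpa [Real.dist_eq] using hK₂.dist_le_mul x y) x hw
    exact this.trans (mul_le_mul_of_nonneg_right (by linarith) (by positivity))
  · by_contra h
    exact absurd (hR x (subset_tsupport _ h)) (not_le.2 ((le_max_left _ _).trans_lt hx))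

/-- The integrand of the regional fractional Laplacian on `(0, ∞)` at `u`, symmetrized around `u`,
as a function of the distance `w` to `u`. -/
noncomputable def symKernel (γ : ℝ) (F : ℝ → ℝ) (u w : ℝ) : ℝ :=
  (F (u + w) - F u + if w < u then F (u - w) - F u else 0) * w ^ (-γ - 1)

/-- An integrable decreasing majorant on `(0, ∞)`. -/
noncomputable def majorant (γ w : ℝ) : ℝ := min (w ^ (-(γ / 2))) (w ^ (-γ - 1))

section Majorant

variable {γ : ℝ}

lemma majorant_nonneg {w : ℝ} (hw : 0 < w) : 0 ≤ majorant γ w := by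
  unfold majorant; positivity

lemma majorant_anti (hγ : γ ∈ Ioo (0 : ℝ) 2) {w w' : ℝ} (hw : 0 < w) (h : w ≤ w') :
    majorant γ w' ≤ majorant γ w :=
  min_le_min (Real.rpow_le_rpow_of_nonpos hw h (by linarith [hγ.1]))
    (Real.rpow_le_rpow_of_nonpos hw h (by linarith [hγ.1]))

lemma integrableOn_majorant (hγ : γ ∈ Ioo (0 : ℝ) 2) : IntegrableOn (majorant γ) (Ioi 0) := by
  have hm : Measurable (majorant γ) := by unfold majorant; fun_prop
  rw [← Ioc_union_Ioi_eq_Ioi (zero_le_one (α := ℝ))]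
  refine IntegrableOn.union ?_ ?_
  · have h := (intervalIntegral.intervalIntegrable_rpow' (a := 0) (b := 1) (r := -(γ / 2))
      (by linarith [hγ.2])).1
    refine Integrable.mono' h hm.aestronglyMeasurable ?_
    filter_upwards [ae_restrict_mem measurableSet_Ioc] with w hw
    rw [Real.norm_of_nonneg (majorant_nonneg hw.1)]
    exact min_le_left _ _
  · have h := integrableOn_Ioi_rpow_of_lt (a := -γ - 1) (by linarith [hγ.1]) one_pos
    refine Integrable.mono' h hm.aestronglyMeasurable ?_
    filter_upwards [ae_restrict_mem measurableSet_Ioi] with w hw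
    rw [Real.norm_of_nonneg (majorant_nonneg (one_pos.trans hw))]
    exact min_le_right _ _

lemma one_add_rpow_le_majorant (hγ : γ ∈ Ioo (0 : ℝ) 2) {S u : ℝ} (hu : 0 < u) (h : u ≤ S)
    (hS : 1 ≤ S) :
    1 + u ^ (-(γ / 2)) ≤ (1 + S ^ (γ / 2)) * S ^ (1 + γ / 2) * majorant γ u := by
  have h0 := hγ.1
  have hS0 : 0 < S := hu.trans_le h
  have e1 : 1 + u ^ (-(γ / 2)) ≤ (1 + S ^ (γ / 2)) * u ^ (-(γ / 2)) := by
    have : 1 ≤ S ^ (γ / 2) * u ^ (-(γ / 2)) := by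
      rw [Real.rpow_neg hu.le, ← div_eq_mul_inv, one_le_div (by positivity)]
      exact Real.rpow_le_rpow hu.le h (by linarith)
    nlinarith
  have e2 : 1 ≤ S ^ (1 + γ / 2) := Real.one_le_rpow hS (by linarith)
  have e3 : u ^ (-(γ / 2)) ≤ S ^ (1 + γ / 2) * u ^ (-γ - 1) := by
    rw [show -(γ / 2) = (1 + γ / 2) + (-γ - 1) by ring, Real.rpow_add hu]
    exact mul_le_mul_of_nonneg_right (Real.rpow_le_rpow hu.le h (by linarith)) (by positivity)
  have e4 : u ^ (-(γ / 2)) ≤ S ^ (1 + γ / 2) * majorant γ u := by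
    unfold majorant
    rw [mul_min_of_nonneg _ _ (by positivity)]
    refine le_min ?_ e3
    exact le_mul_of_one_le_left (by positivity) e2
  rw [mul_assoc]
  exact e1.trans (mul_le_mul_of_nonneg_left e4 (by positivity))

lemma rpow_eq_majorant (hγ : γ ∈ Ioo (0 : ℝ) 2) {u : ℝ} (hu : 1 ≤ u) :
    u ^ (-γ - 1) = majorant γ u :=
  (min_eq_right (Real.rpow_le_rpow_of_exponent_le hu (by linarith [hγ.1]))).symm

end Majorant

namespace IsTame

variable {γ : ℝ} {F : ℝ → ℝ} {C R : ℝ}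

lemma abs_symKernel_le_rpow (h : IsTame F C R) {u w : ℝ} (hw : 0 < w) :
    |symKernel γ F u w| ≤ 4 * C * w ^ (-γ - 1) := by
  have hC := h.C_nonneg
  unfold symKernel
  rw [abs_mul, abs_of_nonneg (a := w ^ (-γ - 1)) (by positivity)]
  refine mul_le_mul_of_nonneg_right ?_ (by positivity)
  have h1 := abs_le.1 (h.bdd (u + w))
  have h2 := abs_le.1 (h.bdd (u - w))
  have h3 := abs_le.1 (h.bdd u)
  split_ifs <;> rw [abs_le] <;> constructor <;> linarith

lemma abs_symKernel_le (hγ : γ ∈ Ioo (0 : ℝ) 2) (h : IsTame F C R) {u w : ℝ} (hu : 0 < u)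
    (hw : 0 < w) :
    |symKernel γ F u w| ≤ 4 * C * (1 + u ^ (-(γ / 2))) * majorant γ w := by
  have hC := h.C_nonneg
  have hγ0 := hγ.1
  have hγ2 := hγ.2
  have hup : 0 < u ^ (-(γ / 2)) := by positivity
  unfold majorant
  rw [mul_min_of_nonneg _ _ (by positivity)]
  refine le_min ?_ ((h.abs_symKernel_le_rpow hw).trans ?_)
  · unfold symKernel
    rw [abs_mul, abs_of_nonneg (a := w ^ (-γ - 1)) (by positivity),
      show -(γ / 2) = (1 + γ / 2) + (-γ - 1) by ring, Real.rpow_add hw, ← mul_assoc]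
    refine mul_le_mul_of_nonneg_right ?_ (by positivity)
    rw [← show -(γ / 2) = (1 + γ / 2) + (-γ - 1) by ring]
    split_ifs with hwu
    · have hsnd : |F (u + w) - F u + (F (u - w) - F u)| ≤ C * w ^ 2 := by
        rw [show F (u + w) - F u + (F (u - w) - F u) = F (u + w) + F (u - w) - 2 * F u by ring]
        exact h.snd u w hw.le
      have hb : |F (u + w) - F u + (F (u - w) - F u)| ≤ 4 * C := by
        have h1 := abs_le.1 (h.bdd (u + w))
        have h2 := abs_le.1 (h.bdd (u - w))
        have h3 := abs_le.1 (h.bdd u)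
        rw [abs_le]; constructor <;> linarith
      have key : |F (u + w) - F u + (F (u - w) - F u)| ≤ 4 * C * w ^ (1 + γ / 2) := by
        rcases le_total w 1 with h1 | h1
        · have : w ^ 2 ≤ w ^ (1 + γ / 2) := by
            rw [← Real.rpow_natCast]
            exact Real.rpow_le_rpow_of_exponent_ge hw h1 (by push_cast; linarith)
          have h0 : 0 ≤ w ^ (1 + γ / 2) := by positivity
          nlinarith
        · have : 1 ≤ w ^ (1 + γ / 2) := Real.one_le_rpow h1 (by linarith)
          nlinarith
      refine key.trans (mul_le_mul_of_nonneg_right ?_ (by positivity))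
      nlinarith
    · have h1 : |F (u + w) - F u + 0| ≤ C * w := by
        simpa [abs_of_pos hw] using h.lip (u + w) u
      have h2 : w ≤ u ^ (-(γ / 2)) * w ^ (1 + γ / 2) := by
        calc w = w ^ (-(γ / 2)) * w ^ (1 + γ / 2) := by
              rw [← Real.rpow_add hw]; simp
          _ ≤ _ := mul_le_mul_of_nonneg_right
              (Real.rpow_le_rpow_of_nonpos hu (not_lt.1 hwu) (by linarith)) (by positivity)
      have h3 : 0 < w ^ (1 + γ / 2) := by positivity
      have h4 : C * w ≤ C * (u ^ (-(γ / 2)) * w ^ (1 + γ / 2)) := mul_le_mul_of_nonneg_left h2 hC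
      have h5 : 0 ≤ C * (u ^ (-(γ / 2)) * w ^ (1 + γ / 2)) := by positivity
      have h6 : 0 ≤ C * w ^ (1 + γ / 2) := by positivity
      nlinarith
  · refine mul_le_mul_of_nonneg_right ?_ (by positivity)
    nlinarith

lemma symKernel_eq_zero (h : IsTame F C R) {u w : ℝ} (hu : R < u) (hw : 0 < w)
    (hd : R < |u - w|) : symKernel γ F u w = 0 := by
  have hR := h.R_nonneg
  unfold symKernel
  rw [h.supp u (hu.trans_le (le_abs_self _)), h.supp (u - w) hd,
    h.supp (u + w) (lt_of_lt_of_le (by linarith) (le_abs_self _))]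
  simp

lemma measurable_symKernel (h : IsTame F C R) (u : ℝ) : Measurable (symKernel γ F u) := by
  have hF := h.cont.measurable
  unfold symKernel
  refine Measurable.mul (Measurable.add (by fun_prop) ?_) (by fun_prop)
  exact Measurable.ite measurableSet_Iio (by fun_prop) measurable_const

lemma continuousAt_symKernel (h : IsTame F C R) {u w : ℝ} (hw : 0 < w) (hne : w ≠ u) :
    ContinuousAt (fun q : ℝ × ℝ => symKernel γ F q.1 q.2) (u, w) := by
  have hF := h.cont
  have hpow : ContinuousAt (fun q : ℝ × ℝ => q.2 ^ (-γ - 1)) (u, w) :=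
    continuousAt_snd.rpow_const (Or.inl hw.ne')
  rcases hne.lt_or_gt with hlt | hgt
  · have h1 : ContinuousAt (fun q : ℝ × ℝ => (F (q.1 + q.2) - F q.1 + (F (q.1 - q.2) - F q.1)) *
        q.2 ^ (-γ - 1)) (u, w) :=
      ContinuousAt.mul (Continuous.continuousAt (by fun_prop)) hpow
    refine h1.congr ?_
    filter_upwards [(isOpen_lt continuous_snd continuous_fst).mem_nhds hlt] with q hq
    simp only [symKernel] at hq ⊢
    rw [if_pos hq]
  · have h1 : ContinuousAt (fun q : ℝ × ℝ => (F (q.1 + q.2) - F q.1 + 0) *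
        q.2 ^ (-γ - 1)) (u, w) :=
      ContinuousAt.mul (Continuous.continuousAt (by fun_prop)) hpow
    refine h1.congr ?_
    filter_upwards [(isOpen_lt continuous_fst continuous_snd).mem_nhds hgt] with q hq
    simp only [symKernel] at hq ⊢
    rw [if_neg (not_lt.2 hq.le)]

end IsTame

/-- The smallest point of the grid `ℕ / n` that is at least `w`. -/
noncomputable def gridCeil (n : ℕ) (w : ℝ) : ℝ := (⌈w * n⌉₊ : ℝ) / n

lemma le_gridCeil {n : ℕ} (hn : 0 < n) (w : ℝ) : w ≤ gridCeil n w := by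
  have : (0 : ℝ) < n := by exact_mod_cast hn
  rw [gridCeil, le_div_iff₀ this]
  exact Nat.le_ceil _

lemma gridCeil_le_add_one {n : ℕ} (hn : 0 < n) {w : ℝ} (hw : 0 ≤ w) : gridCeil n w ≤ w + 1 := by
  have h0 : (0 : ℝ) < n := by exact_mod_cast hn
  have h1 : (1 : ℝ) ≤ n := by exact_mod_cast hn
  rw [gridCeil, div_le_iff₀ h0]
  have := Nat.ceil_lt_add_one (a := w * n) (by positivity)
  linarith

lemma tendsto_gridCeil {w : ℝ} (hw : 0 ≤ w) :
    Tendsto (fun n : ℕ => gridCeil n w) atTop (𝓝 w) :=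
  (tendsto_nat_ceil_mul_div_atTop hw).comp tendsto_natCast_atTop_atTop

lemma measurable_gridCeil (n : ℕ) : Measurable (gridCeil n) := by
  unfold gridCeil
  exact (measurable_from_nat.comp (Nat.measurable_ceil.comp (by fun_prop))).div_const _

lemma hasSum_integral_natCeil {n : ℕ} (hn : 0 < n) {f : ℕ → ℝ}
    (hf : IntegrableOn (fun w : ℝ => f ⌈w * n⌉₊) (Ioi 0)) :
    HasSum (fun z : ℕ => (n : ℝ)⁻¹ * f (z + 1)) (∫ w : ℝ in Ioi 0, f ⌈w * n⌉₊) := by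
  have h0 : (0 : ℝ) < n := by exact_mod_cast hn
  have hcell : ∀ (z : ℕ) (w : ℝ), w ∈ Ioc ((z : ℝ) / n) (((z : ℝ) + 1) / n) ↔
      ⌈w * n⌉₊ = z + 1 := by
    intro z w
    rw [Nat.ceil_eq_iff (by simp), mem_Ioc, div_lt_iff₀ h0, le_div_iff₀ h0]
    simp
  have hU : (⋃ z : ℕ, Ioc ((z : ℝ) / n) (((z : ℝ) + 1) / n)) = Ioi 0 := by
    ext w
    simp only [mem_iUnion, hcell, mem_Ioi]
    constructor
    · rintro ⟨z, hz⟩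
      have : 0 < w * n := Nat.ceil_pos.1 (by omega)
      exact pos_of_mul_pos_left this h0.le
    · intro hw
      have : 0 < ⌈w * n⌉₊ := Nat.ceil_pos.2 (by positivity)
      exact ⟨⌈w * n⌉₊ - 1, by omega⟩
  have hdisj : Pairwise (Function.onFun Disjoint
      (fun z : ℕ => Ioc ((z : ℝ) / n) (((z : ℝ) + 1) / n))) := by
    intro a b hab
    refine disjoint_left.2 fun w ha hb => hab ?_
    have := ((hcell a w).1 ha).symm.trans ((hcell b w).1 hb)
    omega
  have := hasSum_integral_iUnion (μ := volume) (f := fun w : ℝ => f ⌈w * n⌉₊)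
    (fun z : ℕ => measurableSet_Ioc) hdisj (by rwa [hU])
  rw [hU] at this
  refine (congrArg (HasSum · _) (funext fun z : ℕ => ?_)).mp this
  rw [setIntegral_congr_fun (g := fun _ => f (z + 1)) measurableSet_Ioc
    (fun w hw => by simp only [(hcell z w).1 hw]), setIntegral_const, measureReal_def,
    Real.volume_Ioc, ENNReal.toReal_ofReal]
  · rw [smul_eq_mul]; congr 1; field_simp; ring
  · rw [sub_nonneg]; gcongr; linarith

/-- The difference between a Riemann sum of mesh `1 / n` of `symKernel γ F u` and its integral. -/
noncomputable def gridError (γ : ℝ) (F : ℝ → ℝ) (n : ℕ) (u : ℝ) : ℝ :=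
  ∫ w in Ioi (0 : ℝ), (symKernel γ F u (gridCeil n w) - symKernel γ F u w)

namespace IsTame

variable {γ : ℝ} {F : ℝ → ℝ} {C R : ℝ}

lemma abs_symKernel_comp_le (hγ : γ ∈ Ioo (0 : ℝ) 2) (h : IsTame F C R) {u u' w w' : ℝ}
    (hu : 0 < u) (huu' : u ≤ u') (hw : 0 < w) (hww' : w ≤ w') :
    |symKernel γ F u' w'| ≤ 4 * C * (1 + u ^ (-(γ / 2))) * majorant γ w := by
  have hC := h.C_nonneg
  refine (h.abs_symKernel_le hγ (hu.trans_le huu') (hw.trans_le hww')).trans ?_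
  have h1 := majorant_anti hγ hw hww'
  have h2 := majorant_nonneg (γ := γ) (hw.trans_le hww')
  have h3 := Real.rpow_le_rpow_of_nonpos hu huu' (z := -(γ / 2)) (by linarith [hγ.1])
  have h4 : 0 < u' ^ (-(γ / 2)) := by have := hu.trans_le huu'; positivity
  gcongr

lemma integrableOn_symKernel_comp (hγ : γ ∈ Ioo (0 : ℝ) 2) (h : IsTame F C R) {u : ℝ} (hu : 0 < u)
    {φ : ℝ → ℝ} (hφ : Measurable φ) (hle : ∀ w, 0 < w → w ≤ φ w) :
    IntegrableOn (fun w => symKernel γ F u (φ w)) (Ioi 0) := by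
  refine Integrable.mono' ((integrableOn_majorant hγ).const_mul (4 * C * (1 + u ^ (-(γ / 2)))))
    ((h.measurable_symKernel u).comp hφ).aestronglyMeasurable ?_
  filter_upwards [ae_restrict_mem measurableSet_Ioi] with w hw
  exact h.abs_symKernel_comp_le hγ hu le_rfl hw (hle w hw)

lemma integrableOn_symKernel (hγ : γ ∈ Ioo (0 : ℝ) 2) (h : IsTame F C R) {u : ℝ} (hu : 0 < u) :
    IntegrableOn (symKernel γ F u) (Ioi 0) :=
  h.integrableOn_symKernel_comp hγ hu measurable_id fun _ _ => le_rfl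

lemma integrableOn_symKernel_gridCeil (hγ : γ ∈ Ioo (0 : ℝ) 2) (h : IsTame F C R) {u : ℝ}
    (hu : 0 < u) {n : ℕ} (hn : 0 < n) :
    IntegrableOn (fun w => symKernel γ F u (gridCeil n w)) (Ioi 0) :=
  h.integrableOn_symKernel_comp hγ hu (measurable_gridCeil n) fun w _ => le_gridCeil hn w

lemma exists_integral_abs_symKernel_le (hγ : γ ∈ Ioo (0 : ℝ) 2) (h : IsTame F C R) :
    ∃ K, ∀ u, 0 < u → ∀ φ : ℝ → ℝ, Measurable φ → (∀ w, 0 < w → w ≤ φ w ∧ φ w ≤ w + 1) →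
      ∫ w in Ioi 0, |symKernel γ F u (φ w)| ≤ K * majorant γ u := by
  have hC := h.C_nonneg
  have hR := h.R_nonneg
  have hI : 0 ≤ ∫ w in Ioi 0, majorant γ w :=
    setIntegral_nonneg measurableSet_Ioi fun w hw => majorant_nonneg hw
  set S := 2 * R + 2 with hS
  set K₁ := 4 * C * ((1 + S ^ (γ / 2)) * S ^ (1 + γ / 2)) * ∫ w in Ioi 0, majorant γ w with hK₁
  set K₂ := 4 * C * (1 / 2 : ℝ) ^ (-γ - 1) * (2 * R + 2) with hK₂
  have hK₁0 : 0 ≤ K₁ := by positivity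
  have hK₂0 : 0 ≤ K₂ := by positivity
  refine ⟨K₁ + K₂, fun u hu φ hφ hle => ?_⟩
  have hm := majorant_nonneg (γ := γ) hu
  have hint := h.integrableOn_symKernel_comp hγ hu hφ fun w hw => (hle w hw).1
  rcases le_or_gt u S with huS | huS
  · calc ∫ w in Ioi 0, |symKernel γ F u (φ w)|
        ≤ ∫ w in Ioi 0, 4 * C * (1 + u ^ (-(γ / 2))) * majorant γ w :=
          setIntegral_mono_on hint.abs ((integrableOn_majorant hγ).const_mul _) measurableSet_Ioi
            fun w hw => h.abs_symKernel_comp_le hγ hu le_rfl hw (hle w hw).1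
      _ = 4 * C * (1 + u ^ (-(γ / 2))) * ∫ w in Ioi 0, majorant γ w := integral_const_mul _ _
      _ ≤ 4 * C * ((1 + S ^ (γ / 2)) * S ^ (1 + γ / 2) * majorant γ u) *
            ∫ w in Ioi 0, majorant γ w := by
          have := one_add_rpow_le_majorant hγ hu huS (by linarith)
          gcongr
      _ = K₁ * majorant γ u := by rw [hK₁]; ring
      _ ≤ _ := mul_le_mul_of_nonneg_right (by linarith) hm
  · set A : ℝ := 4 * C * (u / 2) ^ (-γ - 1) with hA
    have hA0 : 0 ≤ A := by positivity
    have hbound : ∀ w ∈ Ioi (0 : ℝ), |symKernel γ F u (φ w)| ≤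
        (Icc (u - R - 1) (u + R + 1)).indicator (fun _ => A) w := by
      intro w hw
      obtain ⟨h1, h2⟩ := hle w hw
      have hφ0 : 0 < φ w := lt_of_lt_of_le hw h1
      by_cases hd : R < |u - φ w|
      · rw [h.symKernel_eq_zero (by linarith) hφ0 hd, abs_zero]
        exact indicator_nonneg (fun _ _ => hA0) _
      · rw [not_lt, abs_le] at hd
        rw [indicator_of_mem (show w ∈ Icc (u - R - 1) (u + R + 1) from
          ⟨by linarith, by linarith⟩)]
        refine (h.abs_symKernel_le_rpow hφ0).trans (mul_le_mul_of_nonneg_left ?_ (by positivity))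
        exact Real.rpow_le_rpow_of_nonpos (by linarith) (by linarith) (by linarith [hγ.1])
    have hind : Integrable ((Icc (u - R - 1) (u + R + 1)).indicator (fun _ => A)) :=
      (integrable_indicator_iff measurableSet_Icc).2 (integrableOn_const (by simp))
    calc ∫ w in Ioi 0, |symKernel γ F u (φ w)|
        ≤ ∫ w in Ioi 0, (Icc (u - R - 1) (u + R + 1)).indicator (fun _ => A) w :=
          setIntegral_mono_on hint.abs hind.integrableOn measurableSet_Ioi hbound
      _ ≤ ∫ w, (Icc (u - R - 1) (u + R + 1)).indicator (fun _ => A) w :=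
          setIntegral_le_integral hind (.of_forall fun w => indicator_nonneg (fun _ _ => hA0) _)
      _ = (2 * R + 2) * A := by
          rw [integral_indicator measurableSet_Icc, setIntegral_const, measureReal_def,
            Real.volume_Icc, ENNReal.toReal_ofReal (by linarith), smul_eq_mul]
          ring
      _ = K₂ * majorant γ u := by
          rw [hA, hK₂, ← rpow_eq_majorant hγ (by linarith), div_eq_mul_one_div u,
            Real.mul_rpow hu.le (by norm_num)]
          ring
      _ ≤ _ := mul_le_mul_of_nonneg_right (by linarith) hm

lemma exists_abs_gridError_le (hγ : γ ∈ Ioo (0 : ℝ) 2) (h : IsTame F C R) :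
    ∃ K, 0 ≤ K ∧ ∀ n, 0 < n → ∀ u, 0 < u → |gridError γ F n u| ≤ K * majorant γ u := by
  obtain ⟨K, hK⟩ := h.exists_integral_abs_symKernel_le hγ
  refine ⟨2 * max K 0, by positivity, fun n hn u hu => ?_⟩
  have h1 := hK u hu (gridCeil n) (measurable_gridCeil n)
    fun w hw => ⟨le_gridCeil hn w, gridCeil_le_add_one hn hw.le⟩
  have h2 := hK u hu (fun w => w) measurable_id fun w hw => ⟨le_rfl, by linarith⟩
  have i1 := h.integrableOn_symKernel_gridCeil hγ hu hn
  have i2 := h.integrableOn_symKernel hγ hu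
  have hm : K * majorant γ u ≤ max K 0 * majorant γ u :=
    mul_le_mul_of_nonneg_right (le_max_left _ _) (majorant_nonneg hu)
  unfold gridError
  rw [integral_sub i1 i2]
  refine (abs_sub _ _).trans ?_
  have h3 := abs_integral_le_integral_abs (μ := volume.restrict (Ioi 0))
    (f := fun w => symKernel γ F u (gridCeil n w))
  have h4 := abs_integral_le_integral_abs (μ := volume.restrict (Ioi 0)) (f := symKernel γ F u)
  linarith

lemma tendsto_gridError (hγ : γ ∈ Ioo (0 : ℝ) 2) (h : IsTame F C R) {u : ℝ} (hu : 0 < u) :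
    Tendsto (fun n : ℕ => gridError γ F n (gridCeil n u)) atTop (𝓝 0) := by
  rw [← integral_zero ℝ ℝ (μ := volume.restrict (Ioi 0))]
  refine tendsto_integral_filter_of_dominated_convergence
    (fun w => 2 * (4 * C * (1 + u ^ (-(γ / 2)))) * majorant γ w) ?_ ?_
    ((integrableOn_majorant hγ).const_mul _) ?_
  · exact .of_forall fun n => (((h.measurable_symKernel _).comp (measurable_gridCeil n)).sub
      (h.measurable_symKernel _)).aestronglyMeasurable
  · filter_upwards [eventually_gt_atTop 0] with n hn
    filter_upwards [ae_restrict_mem measurableSet_Ioi] with w hw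
    have h1 := h.abs_symKernel_comp_le hγ hu (le_gridCeil hn u) hw (le_gridCeil hn w)
    have h2 := h.abs_symKernel_comp_le hγ hu (le_gridCeil hn u) hw le_rfl
    exact (abs_sub _ _).trans (by linarith)
  · filter_upwards [ae_restrict_mem measurableSet_Ioi,
      ae_restrict_of_ae (Measure.ae_ne volume u)] with w hw hne
    have hc := h.continuousAt_symKernel (γ := γ) hw hne
    have h1 := hc.tendsto.comp
      ((tendsto_gridCeil hu.le).prodMk_nhds (tendsto_gridCeil (le_of_lt hw)))
    have h2 := hc.tendsto.comp ((tendsto_gridCeil hu.le).prodMk_nhds (tendsto_const_nhds (x := w)))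
    simpa using h1.sub h2

lemma integrableOn_gridError (hγ : γ ∈ Ioo (0 : ℝ) 2) (h : IsTame F C R) {n : ℕ} (hn : 0 < n) :
    IntegrableOn (fun u => |gridError γ F n (gridCeil n u)|) (Ioi 0) := by
  obtain ⟨K, hK0, hK⟩ := h.exists_abs_gridError_le hγ
  refine Integrable.mono' ((integrableOn_majorant hγ).const_mul K) ?_ ?_
  · exact ((measurable_from_nat (f := fun m : ℕ => |gridError γ F n ((m : ℝ) / n)|)).comp
      (Nat.measurable_ceil.comp (by fun_prop))).aestronglyMeasurable
  · filter_upwards [ae_restrict_mem measurableSet_Ioi] with u hu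
    rw [Real.norm_eq_abs, abs_abs]
    have hle := le_gridCeil hn u
    exact (hK n hn _ (lt_of_lt_of_le hu hle)).trans
      (mul_le_mul_of_nonneg_left (majorant_anti hγ hu hle) hK0)

lemma hasSum_abs_gridError (hγ : γ ∈ Ioo (0 : ℝ) 2) (h : IsTame F C R) {n : ℕ} (hn : 0 < n) :
    HasSum (fun x : ℕ => (n : ℝ)⁻¹ * |gridError γ F n (((x : ℝ) + 1) / n)|)
      (∫ u in Ioi 0, |gridError γ F n (gridCeil n u)|) := by
  have := hasSum_integral_natCeil hn (f := fun m : ℕ => |gridError γ F n ((m : ℝ) / n)|)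
    (h.integrableOn_gridError hγ hn)
  simpa [gridCeil] using this

lemma tendsto_integral_abs_gridError (hγ : γ ∈ Ioo (0 : ℝ) 2) (h : IsTame F C R) :
    Tendsto (fun n : ℕ => ∫ u in Ioi 0, |gridError γ F n (gridCeil n u)|) atTop (𝓝 0) := by
  obtain ⟨K, hK0, hK⟩ := h.exists_abs_gridError_le hγ
  suffices H : Tendsto (fun n : ℕ => ∫ u in Ioi 0, |gridError γ F n (gridCeil n u)|) atTop
      (𝓝 (∫ _ in Ioi (0 : ℝ), (0 : ℝ))) by simpa using H
  refine tendsto_integral_filter_of_dominated_convergence (fun u => K * majorant γ u) ?_ ?_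
    ((integrableOn_majorant hγ).const_mul K) ?_
  · filter_upwards [eventually_gt_atTop 0] with n hn
    exact (h.integrableOn_gridError hγ hn).aestronglyMeasurable
  · filter_upwards [eventually_gt_atTop 0] with n hn
    filter_upwards [ae_restrict_mem measurableSet_Ioi] with u hu
    rw [Real.norm_eq_abs, abs_abs]
    have hle := le_gridCeil hn u
    exact (hK n hn _ (lt_of_lt_of_le hu hle)).trans
      (mul_le_mul_of_nonneg_left (majorant_anti hγ hu hle) hK0)
  · filter_upwards [ae_restrict_mem measurableSet_Ioi] with u hu
    simpa using (h.tendsto_gridError hγ hu).abs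

end IsTame

namespace IsTame

variable {γ : ℝ} {F : ℝ → ℝ} {C R : ℝ}

lemma integrableOn_Ici_sub_mul_rpow (hγ : γ ∈ Ioo (0 : ℝ) 2) (h : IsTame F C R) (u : ℝ) {ε : ℝ}
    (hε : 0 < ε) {φ : ℝ → ℝ} (hφ : Measurable φ) :
    IntegrableOn (fun w => (F (φ w) - F u) * w ^ (-γ - 1)) (Ici ε) := by
  have hF := h.cont.measurable
  have hi : IntegrableOn (fun w : ℝ => 2 * C * w ^ (-γ - 1)) (Ici ε) :=
    (integrableOn_Ici_iff_integrableOn_Ioi enorm_ne_top).2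
      ((integrableOn_Ioi_rpow_of_lt (by linarith [hγ.1]) hε).const_mul _)
  refine Integrable.mono' hi
    (((hF.comp hφ).sub_const _).mul (by fun_prop)).aestronglyMeasurable ?_
  filter_upwards [ae_restrict_mem measurableSet_Ici] with w hw
  have hw0 : 0 < w := lt_of_lt_of_le hε hw
  rw [norm_mul, Real.norm_eq_abs, Real.norm_of_nonneg (by positivity)]
  refine mul_le_mul_of_nonneg_right ?_ (by positivity)
  have h1 := abs_le.1 (h.bdd (φ w))
  have h3 := abs_le.1 (h.bdd u)
  rw [abs_le]; constructor <;> linarith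

lemma setIntegral_eq_integral_symKernel (hγ : γ ∈ Ioo (0 : ℝ) 2) (h : IsTame F C R) {u ε : ℝ}
    (hu : 0 < u) (hε : 0 < ε) :
    ∫ v in Ioi 0 ∩ {v : ℝ | ε ≤ |u - v|}, (F v - F u) * |u - v| ^ (-γ - 1) =
      ∫ w in Ici ε, symKernel γ F u w := by
  set φ : ℝ → ℝ := fun v => (F v - F u) * |u - v| ^ (-γ - 1) with hφ
  have hset : Ioi 0 ∩ {v : ℝ | ε ≤ |u - v|} = Ici (u + ε) ∪ Ioc 0 (u - ε) := by
    ext v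
    simp only [mem_inter_iff, mem_Ioi, mem_ofPred_eq, mem_union, mem_Ioc, mem_Ici, le_abs]
    constructor
    · rintro ⟨h0, h1 | h1⟩
      · exact Or.inr ⟨h0, by linarith⟩
      · exact Or.inl (by linarith)
    · rintro (h1 | ⟨h0, h1⟩)
      · exact ⟨by linarith, Or.inr (by linarith)⟩
      · exact ⟨h0, Or.inl (by linarith)⟩
  have hdisj : Disjoint (Ici (u + ε)) (Ioc 0 (u - ε)) :=
    disjoint_left.2 fun v h1 h2 => by
      simp only [mem_Ici, mem_Ioc] at h1 h2; linarith
  have hadd := measurePreserving_add_left (volume : Measure ℝ) u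
  have hadd' := measurableEmbedding_addLeft (G := ℝ) u
  have hsub := Measure.measurePreserving_sub_left (volume : Measure ℝ) u
  have hsub' : MeasurableEmbedding (fun t : ℝ => u - t) :=
    (MeasurableEquiv.subLeft u).measurableEmbedding
  have hpre₁ : (fun w => u + w) ⁻¹' Ici (u + ε) = Ici ε := by ext; simp
  have hpre₂ : (fun w => u - w) ⁻¹' Ioc 0 (u - ε) = Ico ε u := by
    ext; simp
  have heq₁ : EqOn (fun w => φ (u + w)) (fun w => (F (u + w) - F u) * w ^ (-γ - 1)) (Ici ε) := by
    intro w hw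
    have : 0 < w := lt_of_lt_of_le hε hw
    simp [hφ, abs_of_pos this]
  have heq₂ : EqOn (fun w => φ (u - w)) (fun w => (F (u - w) - F u) * w ^ (-γ - 1)) (Ico ε u) := by
    intro w hw
    have : 0 < w := lt_of_lt_of_le hε hw.1
    simp [hφ, abs_of_pos this]
  have hi₁ := h.integrableOn_Ici_sub_mul_rpow hγ u hε (φ := fun w => u + w) (by fun_prop)
  have hi₂ := h.integrableOn_Ici_sub_mul_rpow hγ u hε (φ := fun w => u - w) (by fun_prop)
  have hi₂' := hi₂.mono_set (Ico_subset_Ici_self : Ico ε u ⊆ Ici ε)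
  have hφ₁ : IntegrableOn φ (Ici (u + ε)) := by
    rw [← hadd.integrableOn_comp_preimage hadd', hpre₁]
    exact hi₁.congr_fun heq₁.symm measurableSet_Ici
  have hφ₂ : IntegrableOn φ (Ioc 0 (u - ε)) := by
    rw [← hsub.integrableOn_comp_preimage hsub', hpre₂]
    exact hi₂'.congr_fun heq₂.symm measurableSet_Ico
  have hsym : ∀ w, symKernel γ F u w = (F (u + w) - F u) * w ^ (-γ - 1) +
      (Iio u).indicator (fun w => (F (u - w) - F u) * w ^ (-γ - 1)) w := by
    intro w
    simp only [symKernel, indicator, mem_Iio]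
    split_ifs <;> ring
  rw [hset, setIntegral_union hdisj measurableSet_Ioc hφ₁ hφ₂,
    ← hadd.setIntegral_preimage_emb hadd' φ, ← hsub.setIntegral_preimage_emb hsub' φ, hpre₁, hpre₂,
    setIntegral_congr_fun measurableSet_Ici heq₁, setIntegral_congr_fun measurableSet_Ico heq₂]
  simp_rw [hsym]
  rw [integral_add hi₁ (hi₂.indicator measurableSet_Iio), setIntegral_indicator measurableSet_Iio,
    Ici_inter_Iio]

lemma regFracLap_Ioi_eq (hγ : γ ∈ Ioo (0 : ℝ) 2) (h : IsTame F C R) (c : ℝ) {g : ℝ → ℝ}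
    (hg : ∀ v, 0 < v → g v = F v) {u : ℝ} (hu : 0 < u) :
    regFracLap c γ (Ioi 0) g u = c * ∫ w in Ioi 0, symKernel γ F u w := by
  refine Tendsto.limUnder_eq ?_
  have hcov : AECover (volume.restrict (Ioi (0 : ℝ))) (𝓝[>] (0 : ℝ)) (fun ε => Ici ε) :=
    aecover_Ioi_of_Ici (tendsto_id.mono_left nhdsWithin_le_nhds)
  have hlim := (hcov.integral_tendsto_of_countably_generated
    (h.integrableOn_symKernel hγ hu)).const_mul c
  refine hlim.congr' ?_
  filter_upwards [self_mem_nhdsWithin] with ε hε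
  have hε0 : 0 < ε := hε
  rw [Measure.restrict_restrict measurableSet_Ici, inter_eq_left.2 (Ici_subset_Ioi.2 hε0),
    ← h.setIntegral_eq_integral_symKernel hγ hu hε0, regFracLapTrunc]
  congr 1
  refine setIntegral_congr_fun (measurableSet_Ioi.inter
    (measurableSet_le measurable_const (by fun_prop))) fun v hv => ?_
  rw [hg v hv.1, hg u hu, div_eq_mul_inv, ← Real.rpow_neg (abs_nonneg _), neg_add']

lemma discrete_generator_eq (hγ : γ ∈ Ioo (0 : ℝ) 2) (h : IsTame F C R) (c : ℝ) {g : ℝ → ℝ}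
    (hg : ∀ v, 0 < v → g v = F v) {n : ℕ} (hn : 0 < n) (x : ℕ) :
    (n : ℝ) ^ γ * ∑' y : ℕ, (g (((y : ℝ) + 1) / n) - g (((x : ℝ) + 1) / n)) *
        transP c γ (((y : ℤ) + 1) - ((x : ℤ) + 1)) =
      c * ∫ w in Ioi 0, symKernel γ F (((x : ℝ) + 1) / n) (gridCeil n w) := by
  have h0 : (0 : ℝ) < n := by exact_mod_cast hn
  set u : ℝ := ((x : ℝ) + 1) / n with hu
  have hu0 : 0 < u := by positivity
  have hscale : ∀ m : ℝ, 0 < m → (n : ℝ) ^ γ * m ^ (-γ - 1) = (n : ℝ)⁻¹ * (m / n) ^ (-γ - 1) := by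
    intro m hm
    have hp : (n : ℝ) ^ γ * (n : ℝ) ^ (-γ - 1) = (n : ℝ)⁻¹ := by
      rw [← Real.rpow_add h0, ← Real.rpow_neg_one]; congr 1; ring
    rw [Real.div_rpow hm.le h0.le, ← hp]
    field_simp
  set D : ℕ → ℝ := fun y => (n : ℝ) ^ γ * ((g (((y : ℝ) + 1) / n) - g u) *
    transP c γ (((y : ℤ) + 1) - ((x : ℤ) + 1))) with hD
  set Q : ℕ → ℝ := fun z => if z < x then
    c * ((n : ℝ)⁻¹ * ((F (u - ((z : ℝ) + 1) / n) - F u) * (((z : ℝ) + 1) / n) ^ (-γ - 1)))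
    else 0 with hQ
  have hsum := (hasSum_integral_natCeil hn (f := fun m : ℕ => symKernel γ F u ((m : ℝ) / n))
    (h.integrableOn_symKernel_gridCeil hγ hu0 hn)).mul_left c
  have hQsum : HasSum Q (∑ z ∈ Finset.range x, Q z) :=
    hasSum_sum_of_ne_finset_zero fun z hz => if_neg (by simpa using hz)
  have hDx : D x = 0 := by simp [hD, transP]
  have hDpos : ∀ z : ℕ, D (z + (x + 1)) =
      c * ((n : ℝ)⁻¹ * ((F (u + ((z : ℝ) + 1) / n) - F u) * (((z : ℝ) + 1) / n) ^ (-γ - 1))) := by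
    intro z
    have hz : ((z + (x + 1) : ℕ) : ℤ) + 1 - ((x : ℤ) + 1) = (z : ℤ) + 1 := by push_cast; ring
    have hpt : (((z + (x + 1) : ℕ) : ℝ) + 1) / n = u + ((z : ℝ) + 1) / n := by
      rw [hu]; push_cast; ring
    have hz0 : (z : ℤ) + 1 ≠ 0 := by positivity
    simp only [hD]
    rw [hz, hpt, hg _ (by positivity), hg u hu0, transP, if_neg hz0]
    push_cast
    rw [abs_of_pos (by positivity)]
    have := hscale ((z : ℝ) + 1) (by positivity)
    linear_combination (F (u + ((z : ℝ) + 1) / n) - F u) * c * this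
  have hDneg : ∀ z < x, D (x - 1 - z) = Q z := by
    intro z hzx
    have hz : ((x - 1 - z : ℕ) : ℤ) + 1 - ((x : ℤ) + 1) = -((z : ℤ) + 1) := by omega
    have hz' : ((x - 1 - z : ℕ) : ℝ) + 1 = (x : ℝ) - z := by
      have : ((x - 1 - z : ℕ) : ℤ) + 1 = (x : ℤ) - z := by omega
      exact_mod_cast this
    have hpt : (((x - 1 - z : ℕ) : ℝ) + 1) / n = u - ((z : ℝ) + 1) / n := by
      rw [hu, hz']; ring
    have hz0 : -((z : ℤ) + 1) ≠ 0 := by omega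
    simp only [hD, hQ]
    rw [if_pos hzx, hz, hg (((x - 1 - z : ℕ) + 1) / n) (by positivity), hpt, hg u hu0, transP,
      if_neg hz0]
    push_cast
    rw [abs_neg, abs_of_pos (by positivity)]
    have := hscale ((z : ℝ) + 1) (by positivity)
    linear_combination (F (u - ((z : ℝ) + 1) / n) - F u) * c * this
  have hfin : ∑ z ∈ Finset.range x, Q z = ∑ y ∈ Finset.range x, D y := by
    rw [← Finset.sum_range_reflect D]
    exact Finset.sum_congr rfl fun z hz => (hDneg z (by simpa using hz)).symm
  have hshift : HasSum (fun z => D (z + (x + 1)))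
      (c * (∫ w in Ioi 0, symKernel γ F u (gridCeil n w)) - ∑ z ∈ Finset.range x, Q z) := by
    refine (congrArg (HasSum · _) (funext fun z : ℕ => ?_)).mp (hsum.sub hQsum)
    have hlt : ((z : ℝ) + 1) / n < u ↔ z < x := by
      rw [hu, div_lt_div_iff_of_pos_right h0]; simp
    rw [hDpos]
    simp only [symKernel, hQ]
    push_cast
    simp only [hlt]
    split_ifs <;> ring
  have := (hasSum_nat_add_iff (x + 1)).1 hshift
  rw [Finset.sum_range_succ, hDx, hfin, add_zero, sub_add_cancel] at this
  rw [← tsum_mul_left]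
  exact this.tsum_eq

lemma generator_sub_regFracLap_eq (hγ : γ ∈ Ioo (0 : ℝ) 2) (h : IsTame F C R) (c : ℝ) {g : ℝ → ℝ}
    (hg : ∀ v, 0 < v → g v = F v) {n : ℕ} (hn : 0 < n) (x : ℕ) :
    (n : ℝ) ^ γ * (∑' y : ℕ, (g (((y : ℝ) + 1) / n) - g (((x : ℝ) + 1) / n)) *
        transP c γ (((y : ℤ) + 1) - ((x : ℤ) + 1))) -
        regFracLap c γ (Ioi 0) g (((x : ℝ) + 1) / n) =
      c * gridError γ F n (((x : ℝ) + 1) / n) := by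
  have hu : 0 < ((x : ℝ) + 1) / n := by
    have : (0 : ℝ) < n := by exact_mod_cast hn
    positivity
  rw [h.discrete_generator_eq hγ c hg hn, h.regFracLap_Ioi_eq hγ c hg hu, gridError,
    integral_sub (h.integrableOn_symKernel_gridCeil hγ hu hn) (h.integrableOn_symKernel hγ hu)]
  ring

end IsTame

section Reduction

variable {γ : ℝ}

lemma symKernel_sum (a : ℕ → ℝ → ℝ) (S : Finset ℕ) (s u w : ℝ) :
    symKernel γ (fun v => ∑ j ∈ S, a j v * s ^ j) u w = ∑ j ∈ S, symKernel γ (a j) u w * s ^ j := by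
  unfold symKernel
  split_ifs
  all_goals
    simp only [← Finset.sum_sub_distrib, ← Finset.sum_add_distrib, add_zero, Finset.sum_mul]
    exact Finset.sum_congr rfl fun j _ => by ring

lemma gridError_sum (hγ : γ ∈ Ioo (0 : ℝ) 2) {a : ℕ → ℝ → ℝ}
    (ha : ∀ j, ∃ C R, IsTame (a j) C R) (S : Finset ℕ) (s : ℝ) {n : ℕ} (hn : 0 < n) {u : ℝ}
    (hu : 0 < u) :
    gridError γ (fun v => ∑ j ∈ S, a j v * s ^ j) n u = ∑ j ∈ S, gridError γ (a j) n u * s ^ j := by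
  unfold gridError
  simp_rw [← integral_mul_const]
  rw [← integral_finsetSum]
  · simp only [symKernel_sum, ← Finset.sum_sub_distrib, sub_mul]
  · intro j _
    obtain ⟨C, R, h⟩ := ha j
    exact ((h.integrableOn_symKernel_gridCeil hγ hu hn).sub
      (h.integrableOn_symKernel hγ hu)).mul_const _

lemma exists_isTame_sum {a : ℕ → ℝ → ℝ}
    (ha : ∀ j, ContDiff ℝ (⊤ : ℕ∞) (a j) ∧ HasCompactSupport (a j)) (S : Finset ℕ) (s : ℝ) :
    ∃ C R, IsTame (fun v => ∑ j ∈ S, a j v * s ^ j) C R := by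
  refine exists_isTame (ContDiff.sum fun j _ => (ha j).1.mul contDiff_const) ?_
  induction S using Finset.induction_on with
  | empty => exact HasCompactSupport.zero
  | insert i S hi ih =>
    simp only [Finset.sum_insert hi]
    exact ((ha i).2.mul_right (f' := fun _ => s ^ i)).add ih

lemma Real.biSup_Icc_le {T B : ℝ} {f : ℝ → ℝ} (hB : 0 ≤ B) (h : ∀ s ∈ Icc 0 T, f s ≤ B) :
    ⨆ s ∈ Icc (0 : ℝ) T, f s ≤ B :=
  Real.iSup_le (fun s => Real.iSup_le (fun hs => h s hs) hB) hB

lemma Real.biSup_Icc_abs_nonneg {T : ℝ} {f : ℝ → ℝ} : 0 ≤ ⨆ s ∈ Icc (0 : ℝ) T, |f s| :=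
  Real.iSup_nonneg fun _ => Real.iSup_nonneg fun _ => abs_nonneg _

lemma tendsto_halfLine (hγ : γ ∈ Ioo (0 : ℝ) 2) {c : ℝ} (hc : 0 < c) (T : ℝ) {H P : ℝ → ℝ → ℝ}
    (hP : SDifMem P) (hH : ∀ s u, 0 < u → H s u = P s u) :
    Tendsto (fun n : ℕ => (n : ℝ)⁻¹ * (∑' x : ℕ, ⨆ s ∈ Set.Icc (0 : ℝ) T,
      |(n : ℝ) ^ γ * (∑' y : ℕ,
          (H s (((y : ℝ) + 1) / n) - H s (((x : ℝ) + 1) / n)) *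
            transP c γ (((y : ℤ) + 1) - ((x : ℤ) + 1)))
        - regFracLap c γ (Set.Ioi (0 : ℝ)) (H s) (((x : ℝ) + 1) / n)|)) atTop (𝓝 0) := by
  obtain ⟨k, a, ha, hPa⟩ := hP
  have hat : ∀ j, ∃ C R, IsTame (a j) C R := fun j => exists_isTame (ha j).1 (ha j).2
  set S := Finset.range (k + 1)
  have hlim : Tendsto (fun n : ℕ => ∑ j ∈ S, c * |T| ^ j *
      ∫ u in Ioi 0, |gridError γ (a j) n (gridCeil n u)|) atTop (𝓝 0) := by
    rw [← Finset.sum_const_zero (s := S) (M := ℝ)]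
    refine tendsto_finsetSum _ fun j _ => ?_
    obtain ⟨C, R, h⟩ := hat j
    simpa using (h.tendsto_integral_abs_gridError hγ).const_mul (c * |T| ^ j)
  refine squeeze_zero' (.of_forall fun n => ?_) ?_ hlim
  · exact mul_nonneg (by positivity) (tsum_nonneg fun x => Real.biSup_Icc_abs_nonneg)
  filter_upwards [eventually_gt_atTop 0] with n hn
  have h0 : (0 : ℝ) < n := by exact_mod_cast hn
  have hsum : HasSum (fun x : ℕ => ∑ j ∈ S, c * |T| ^ j *
      ((n : ℝ)⁻¹ * |gridError γ (a j) n (((x : ℝ) + 1) / n)|))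
      (∑ j ∈ S, c * |T| ^ j * ∫ u in Ioi 0, |gridError γ (a j) n (gridCeil n u)|) := by
    refine hasSum_sum fun j _ => ?_
    obtain ⟨C, R, h⟩ := hat j
    exact (h.hasSum_abs_gridError hγ hn).mul_left _
  rw [← tsum_mul_left, ← hsum.tsum_eq]
  have hle : ∀ x : ℕ, (n : ℝ)⁻¹ * (⨆ s ∈ Set.Icc (0 : ℝ) T,
      |(n : ℝ) ^ γ * (∑' y : ℕ,
          (H s (((y : ℝ) + 1) / n) - H s (((x : ℝ) + 1) / n)) *
            transP c γ (((y : ℤ) + 1) - ((x : ℤ) + 1)))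
        - regFracLap c γ (Set.Ioi (0 : ℝ)) (H s) (((x : ℝ) + 1) / n)|) ≤
      ∑ j ∈ S, c * |T| ^ j * ((n : ℝ)⁻¹ * |gridError γ (a j) n (((x : ℝ) + 1) / n)|) := by
    intro x
    have hu : 0 < ((x : ℝ) + 1) / n := by positivity
    rw [show ∑ j ∈ S, c * |T| ^ j * ((n : ℝ)⁻¹ * |gridError γ (a j) n (((x : ℝ) + 1) / n)|) =
      (n : ℝ)⁻¹ * ∑ j ∈ S, c * |T| ^ j * |gridError γ (a j) n (((x : ℝ) + 1) / n)| by
        rw [Finset.mul_sum]; exact Finset.sum_congr rfl fun j _ => by ring]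
    refine mul_le_mul_of_nonneg_left (Real.biSup_Icc_le
      (Finset.sum_nonneg fun j _ => by positivity) fun s hs => ?_) (by positivity)
    obtain ⟨C, R, h⟩ := exists_isTame_sum ha S s
    rw [h.generator_sub_regFracLap_eq hγ c (fun v hv => (hH s v hv).trans (hPa s v)) hn,
      gridError_sum hγ hat S s hn hu, Finset.mul_sum]
    refine (Finset.abs_sum_le_sum_abs _ _).trans (Finset.sum_le_sum fun j _ => ?_)
    have hsT : |s| ^ j ≤ |T| ^ j := by
      rw [abs_of_nonneg hs.1]
      exact pow_le_pow_left₀ hs.1 (hs.2.trans (le_abs_self T)) j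
    rw [abs_mul, abs_mul, abs_of_pos hc, abs_pow, mul_comm |gridError _ _ _ _|, ← mul_assoc]
    gcongr
  have hnn : ∀ x : ℕ, 0 ≤ (n : ℝ)⁻¹ * (⨆ s ∈ Set.Icc (0 : ℝ) T,
      |(n : ℝ) ^ γ * (∑' y : ℕ,
          (H s (((y : ℝ) + 1) / n) - H s (((x : ℝ) + 1) / n)) *
            transP c γ (((y : ℤ) + 1) - ((x : ℤ) + 1)))
        - regFracLap c γ (Set.Ioi (0 : ℝ)) (H s) (((x : ℝ) + 1) / n)|) :=
    fun x => mul_nonneg (by positivity) Real.biSup_Icc_abs_nonneg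
  exact (Summable.of_nonneg_of_le hnn hle hsum.summable).tsum_le_tsum hle hsum.summable

lemma transP_neg_sub_neg (c γ : ℝ) (a b : ℤ) : transP c γ (-a - -b) = transP c γ (a - b) := by
  rw [← neg_sub' a b]
  simp only [transP, neg_eq_zero, Int.cast_neg, abs_neg]

lemma regFracLap_Iio_neg (c γ : ℝ) (g : ℝ → ℝ) (u : ℝ) :
    regFracLap c γ (Iio 0) g (-u) = regFracLap c γ (Ioi 0) (fun v => g (-v)) u := by
  unfold regFracLap
  congr 1
  ext ε
  unfold regFracLapTrunc
  rw [← (Measure.measurePreserving_neg (volume : Measure ℝ)).setIntegral_preimage_emb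
    (MeasurableEquiv.neg ℝ).measurableEmbedding]
  have hset : Neg.neg ⁻¹' (Iio 0 ∩ {v : ℝ | ε ≤ |(-u) - v|}) = Ioi 0 ∩ {v : ℝ | ε ≤ |u - v|} := by
    ext v
    simp only [mem_preimage, mem_inter_iff, mem_Iio, mem_Ioi, mem_ofPred_eq, neg_lt_zero,
      neg_sub_neg, abs_sub_comm v u]
  rw [hset]
  simp only [neg_sub_neg, abs_sub_comm _ u]

lemma IsTame.abs_sub_le_rpow (hγ : γ ∈ Ioo (0 : ℝ) 2) {F : ℝ → ℝ} {C R : ℝ} (h : IsTame F C R)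
    {u : ℝ} (hu : 0 < u) : |F u - F 0| ≤ 2 * C * u ^ (γ / 2) := by
  have hC := h.C_nonneg
  have h0 := hγ.1
  rcases le_total u 1 with h1 | h1
  · have hl := h.lip u 0
    rw [sub_zero, abs_of_pos hu] at hl
    have : u ≤ u ^ (γ / 2) := by
      simpa using Real.rpow_le_rpow_of_exponent_ge hu h1 (show γ / 2 ≤ 1 by linarith [hγ.2])
    nlinarith
  · have : 1 ≤ u ^ (γ / 2) := Real.one_le_rpow h1 (by linarith)
    have h2 := abs_le.1 (h.bdd u)
    have h3 := abs_le.1 (h.bdd 0)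
    have : |F u - F 0| ≤ 2 * C := by rw [abs_le]; constructor <;> linarith
    nlinarith

lemma tendsto_boundary (hγ : γ ∈ Ioo (0 : ℝ) 2) {c : ℝ} (hc : 0 < c) (T : ℝ) {H P : ℝ → ℝ → ℝ}
    (hP : SDifMem P) (hH : ∀ s u, 0 ≤ u → H s u = P s u) :
    Tendsto (fun n : ℕ => (n : ℝ) ^ (γ - 1) * ∑' y : ℕ,
      (⨆ s ∈ Set.Icc (0 : ℝ) T, |H s (((y : ℝ) + 1) / n) - H s 0|) *
        transP c γ ((y : ℤ) + 1)) atTop (𝓝 0) := by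
  obtain ⟨k, a, ha, hPa⟩ := hP
  choose C R hat using fun j => exists_isTame (ha j).1 (ha j).2
  set A : ℝ := ∑ j ∈ Finset.range (k + 1), 2 * C j * |T| ^ j
  have hC : ∀ j, 0 ≤ C j := fun j => (hat j).C_nonneg
  have hA0 : 0 ≤ A := Finset.sum_nonneg fun j _ => by have := hC j; positivity
  have hsup : ∀ u : ℝ, 0 < u → ⨆ s ∈ Set.Icc (0 : ℝ) T, |H s u - H s 0| ≤ A * u ^ (γ / 2) := by
    intro u hu
    refine Real.biSup_Icc_le (by positivity) fun s hs => ?_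
    rw [hH s u hu.le, hH s 0 le_rfl, hPa, hPa, ← Finset.sum_sub_distrib, Finset.sum_mul]
    refine (Finset.abs_sum_le_sum_abs _ _).trans (Finset.sum_le_sum fun j _ => ?_)
    have hsT : |s| ^ j ≤ |T| ^ j := by
      rw [abs_of_nonneg hs.1]
      exact pow_le_pow_left₀ hs.1 (hs.2.trans (le_abs_self T)) j
    have h1 := (hat j).abs_sub_le_rpow hγ hu
    have h2 := hC j
    rw [← sub_mul, abs_mul, abs_pow]
    calc _ ≤ 2 * C j * u ^ (γ / 2) * |T| ^ j := by gcongr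
      _ = _ := by ring
  have hsummable : Summable fun y : ℕ => ((y : ℝ) + 1) ^ (-(γ / 2) - 1) := by
    have := (summable_nat_add_iff 1).2
      (Real.summable_nat_rpow.2 (show -(γ / 2) - 1 < -1 by linarith [hγ.1]))
    simpa using this
  have hlim : Tendsto (fun n : ℕ => (n : ℝ) ^ (-(1 - γ / 2)) *
      (A * c * ∑' y : ℕ, ((y : ℝ) + 1) ^ (-(γ / 2) - 1))) atTop (𝓝 0) := by
    simpa using ((tendsto_rpow_neg_atTop (y := 1 - γ / 2) (by linarith [hγ.2])).comp
      tendsto_natCast_atTop_atTop).mul_const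
        (A * c * ∑' y : ℕ, ((y : ℝ) + 1) ^ (-(γ / 2) - 1))
  have htP : ∀ y : ℕ, transP c γ ((y : ℤ) + 1) = c * ((y : ℝ) + 1) ^ (-γ - 1) := by
    intro y
    rw [transP, if_neg (by positivity)]
    push_cast
    rw [abs_of_pos (by positivity)]
  refine squeeze_zero' (.of_forall fun n => ?_) ?_ hlim
  · refine mul_nonneg (by positivity) (tsum_nonneg fun y =>
      mul_nonneg Real.biSup_Icc_abs_nonneg ?_)
    rw [htP]; positivity
  filter_upwards [eventually_gt_atTop 0] with n hn
  have h0 : (0 : ℝ) < n := by exact_mod_cast hn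
  have hle : ∀ y : ℕ, (⨆ s ∈ Set.Icc (0 : ℝ) T, |H s (((y : ℝ) + 1) / n) - H s 0|) *
      transP c γ ((y : ℤ) + 1) ≤
      A * c * (n : ℝ) ^ (-(γ / 2)) * ((y : ℝ) + 1) ^ (-(γ / 2) - 1) := by
    intro y
    have hy : (0 : ℝ) < (y : ℝ) + 1 := by positivity
    rw [htP]
    calc _ ≤ A * (((y : ℝ) + 1) / n) ^ (γ / 2) * (c * ((y : ℝ) + 1) ^ (-γ - 1)) :=
          mul_le_mul_of_nonneg_right (hsup _ (by positivity)) (by positivity)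
      _ = _ := by
          rw [show -(γ / 2) - 1 = γ / 2 + (-γ - 1) by ring, Real.rpow_add hy,
            Real.div_rpow hy.le h0.le, Real.rpow_neg h0.le]
          ring
  have hnn : ∀ y : ℕ, 0 ≤ (⨆ s ∈ Set.Icc (0 : ℝ) T, |H s (((y : ℝ) + 1) / n) - H s 0|) *
      transP c γ ((y : ℤ) + 1) := by
    intro y
    refine mul_nonneg Real.biSup_Icc_abs_nonneg ?_
    rw [htP]; positivity
  have hs := hsummable.mul_left (A * c * (n : ℝ) ^ (-(γ / 2)))
  have := (Summable.of_nonneg_of_le hnn hle hs).tsum_le_tsum hle hs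
  rw [tsum_mul_left] at this
  refine (mul_le_mul_of_nonneg_left this (by positivity)).trans_eq ?_
  rw [show -(1 - γ / 2) = (γ - 1) + -(γ / 2) by ring, Real.rpow_add h0]
  ring

lemma SNeuMem.sDifMem {G : ℝ → ℝ → ℝ} (hG : SNeuMem G) : SDifMem G := by
  obtain ⟨k, a, b, -, ha, h⟩ := hG
  exact ⟨k, a, fun j => ⟨(ha j).1, (ha j).2.1⟩, h⟩

lemma SDifMem.comp_neg {G : ℝ → ℝ → ℝ} (hG : SDifMem G) : SDifMem fun s u => G s (-u) := by
  obtain ⟨k, a, ha, h⟩ := hG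
  refine ⟨k, fun j u => a j (-u), fun j => ⟨(ha j).1.comp contDiff_neg, ?_⟩, fun t u => h t (-u)⟩
  exact (ha j).2.comp_homeomorph (Homeomorph.neg ℝ)

end Reduction

theorem stmt14 (γ c T : ℝ) (hγ : γ ∈ Set.Ioo (0 : ℝ) 2) (hc : 0 < c)
    (hprob : HasSum (transP c γ) 1) (hT : 0 < T)
    (G : ℝ → ℝ → ℝ)
    (hG : (1 < γ ∧ γ < 2 ∧ SRobMem G) ∨ (γ ≤ 1 ∧ SNeuMem G)) :
    Tendsto (fun n : ℕ =>
        -- positive half-line term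
        (n : ℝ)⁻¹ * (∑' x : ℕ, ⨆ s ∈ Set.Icc (0 : ℝ) T,
          |(n : ℝ) ^ γ * (∑' y : ℕ,
              (G s (((y : ℝ) + 1) / n) - G s (((x : ℝ) + 1) / n)) *
                transP c γ (((y : ℤ) + 1) - ((x : ℤ) + 1)))
            - regFracLap c γ (Set.Ioi (0 : ℝ)) (G s) (((x : ℝ) + 1) / n)|)
        -- negative half-line term
        + (n : ℝ)⁻¹ * (∑' x : ℕ, ⨆ s ∈ Set.Icc (0 : ℝ) T,
          |(n : ℝ) ^ γ * (∑' y : ℕ,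
              (G s ((-((y : ℝ) + 1)) / n) - G s ((-((x : ℝ) + 1)) / n)) *
                transP c γ ((-((y : ℤ) + 1)) - (-((x : ℤ) + 1))))
            - regFracLap c γ (Set.Iio (0 : ℝ)) (G s) ((-((x : ℝ) + 1)) / n)|)
        -- boundary term
        + (n : ℝ) ^ (γ - 1) * ∑' y : ℕ,
            (⨆ s ∈ Set.Icc (0 : ℝ) T, |G s (((y : ℝ) + 1) / n) - G s 0|) *
              transP c γ ((y : ℤ) + 1))
      atTop (𝓝 0) := by
  obtain ⟨Gm, Gp, hGm, hGp, hG⟩ : SRobMem G := by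
    rcases hG with ⟨-, -, h⟩ | ⟨-, h⟩
    · exact h
    · exact ⟨G, G, h.sDifMem, h.sDifMem, by simp⟩
  have h1 := tendsto_halfLine hγ hc T hGp (H := G) fun s u hu => by
    rw [hG, if_neg (not_lt.2 hu.le)]
  have h2 := tendsto_halfLine hγ hc T hGm.comp_neg (H := fun s u => G s (-u)) fun s u hu => by
    rw [hG, if_pos (neg_lt_zero.2 hu)]
  have h3 := tendsto_boundary hγ hc T hGp (H := G) fun s u hu => by
    rw [hG, if_neg (not_lt.2 hu)]
  have h := (h1.add h2).add h3
  simp only [add_zero] at h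
  simpa only [neg_div, regFracLap_Iio_neg, transP_neg_sub_neg] using h
end

section
/- Let γ ∈ (0,2), T > 0 and β > 0. Let G ∈ S_Neu if γ ∈ (0,1], and G ∈ S_Rob with G₋(t,0) = G₊(t,0) for all t ∈ [0,T] if γ ∈ (1,2). Then lim_{n→∞} (1/n) ∑_{x∈ℤ} sup_{s∈[0,T]} | n^{γ−β} ∑_{y : {x,y}∈S₀} (G(s, y/n) − G(s, x/n)) p(y−x) | = 0. -/
open MeasureTheory Filter Set Topology

theorem summable_one_add_abs_int_rpow {p : ℝ} (hp : 1 < p) :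
    Summable fun x : ℤ => (1 + |(x : ℝ)|) ^ (-p) := by
  refine Summable.of_norm_bounded_eventually (Real.summable_abs_int_rpow hp) ?_
  filter_upwards [(Set.finite_singleton (0 : ℤ)).compl_mem_cofinite] with x hx
  have hx0 : (x : ℝ) ≠ 0 := by exact_mod_cast hx
  rw [Real.norm_of_nonneg (by positivity)]
  exact Real.rpow_le_rpow_of_nonpos (abs_pos.mpr hx0) (by linarith) (by linarith)

theorem rpow_neg_le_of_le_two_mul {A D p : ℝ} (hA : 0 < A) (hAD : A ≤ 2 * D) (hp : 0 ≤ p) :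
    D ^ (-p) ≤ 2 ^ p * A ^ (-p) := by
  have hD : 0 < D := by linarith
  have h := Real.rpow_le_rpow_of_nonpos hA hAD (neg_nonpos.mpr hp)
  rw [Real.mul_rpow (by norm_num) hD.le] at h
  calc D ^ (-p) = 2 ^ p * (2 ^ (-p) * D ^ (-p)) := by
        rw [← mul_assoc, ← Real.rpow_add (by norm_num)]
        simp
    _ ≤ 2 ^ p * A ^ (-p) := by gcongr

theorem rpow_neg_add_le {A B D p q : ℝ} (hA : 0 < A) (hB : 0 < B) (hAD : A ≤ 2 * D)
    (hBD : B ≤ 2 * D) (hp : 0 ≤ p) (hq : 0 ≤ q) :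
    D ^ (-(p + q)) ≤ 2 ^ (p + q) * (A ^ (-p) * B ^ (-q)) := by
  have hD : 0 < D := by linarith
  calc D ^ (-(p + q)) = D ^ (-p) * D ^ (-q) := by
        rw [← Real.rpow_add hD]
        ring_nf
    _ ≤ (2 ^ p * A ^ (-p)) * (2 ^ q * B ^ (-q)) := by
        gcongr
        · exact rpow_neg_le_of_le_two_mul hA hAD hp
        · exact rpow_neg_le_of_le_two_mul hB hBD hq
    _ = 2 ^ (p + q) * (A ^ (-p) * B ^ (-q)) := by
        rw [Real.rpow_add (by norm_num)]
        ring

theorem abs_add_abs_eq_abs_sub_of_crossing {x y : ℤ} (h : (x < 0 ∧ 0 ≤ y) ∨ (y < 0 ∧ 0 ≤ x)) :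
    |(x : ℝ)| + |(y : ℝ)| = |(y : ℝ) - x| ∧ 1 ≤ |(y : ℝ) - x| := by
  have h' : |x| + |y| = |y - x| ∧ 1 ≤ |y - x| := by grind
  exact_mod_cast h'

theorem transP_of_crossing (c γ : ℝ) {x y : ℤ} (h : (x < 0 ∧ 0 ≤ y) ∨ (y < 0 ∧ 0 ≤ x)) :
    transP c γ (y - x) = c * |(y : ℝ) - x| ^ (-γ - 1) := by
  rw [transP, if_neg (by omega)]
  push_cast
  rfl

theorem abs_sum_mul_pow_le {T t B : ℝ} (ht : t ∈ Set.Icc 0 T) (m : ℕ) {b K : ℕ → ℝ}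
    (hb : ∀ j, |b j| ≤ K j * B) :
    |∑ j ∈ Finset.range m, b j * t ^ j| ≤ (∑ j ∈ Finset.range m, K j * T ^ j) * B := by
  refine (Finset.abs_sum_le_sum_abs _ _).trans ?_
  rw [Finset.sum_mul]
  refine Finset.sum_le_sum fun j _ => ?_
  have h0 : 0 ≤ t ^ j := pow_nonneg ht.1 j
  have hKB : 0 ≤ K j * B := (abs_nonneg _).trans (hb j)
  rw [abs_mul, abs_of_nonneg h0]
  calc |b j| * t ^ j ≤ (K j * B) * T ^ j :=
        mul_le_mul (hb j) (pow_le_pow_left₀ ht.1 ht.2 j) h0 hKB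
    _ = K j * T ^ j * B := by ring

/-- Time-uniform bound and Lipschitz estimate for a function in `S_Dif`. -/
theorem SDifMem.exists_bound_lipschitz {G : ℝ → ℝ → ℝ} (hG : SDifMem G) {T : ℝ} (hT : 0 ≤ T) :
    ∃ K : ℝ, 0 ≤ K ∧ ∀ t ∈ Set.Icc 0 T, (∀ u, |G t u| ≤ K) ∧
      ∀ u v, |G t v - G t u| ≤ K * |v - u| := by
  obtain ⟨k, a, ha, hGa⟩ := hG
  choose K hK using fun j => (ha j).2.exists_bound_of_continuous (ha j).1.continuous
  choose L hL using fun j => (ha j).1.lipschitzWith_of_hasCompactSupport (ha j).2 (by simp)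
  have hK0 : ∀ j, 0 ≤ K j := fun j => (norm_nonneg _).trans (hK j 0)
  have hS : 0 ≤ ∑ j ∈ Finset.range (k + 1), K j * T ^ j :=
    Finset.sum_nonneg fun j _ => mul_nonneg (hK0 j) (pow_nonneg hT j)
  have hS' : 0 ≤ ∑ j ∈ Finset.range (k + 1), (L j : ℝ) * T ^ j :=
    Finset.sum_nonneg fun j _ => mul_nonneg (L j).2 (pow_nonneg hT j)
  refine ⟨(∑ j ∈ Finset.range (k + 1), K j * T ^ j) +
    ∑ j ∈ Finset.range (k + 1), (L j : ℝ) * T ^ j, add_nonneg hS hS', fun t ht => ⟨fun u => ?_,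
    fun u v => ?_⟩⟩
  · rw [hGa]
    have h := abs_sum_mul_pow_le ht (k + 1) (b := fun j => a j u) (K := K) (B := 1)
      fun j => by simpa using hK j u
    linarith
  · rw [hGa, hGa, ← Finset.sum_sub_distrib]
    simp_rw [← sub_mul]
    have h := abs_sum_mul_pow_le ht (k + 1) (b := fun j => a j v - a j u)
      (K := fun j => (L j : ℝ)) (B := |v - u|)
      fun j => by simpa [Real.dist_eq] using (hL j).dist_le_mul v u
    exact h.trans (mul_le_mul_of_nonneg_right (by linarith) (abs_nonneg _))

/-- Functions in `S_Neu` vanish at the origin and are dominated by any nonpositive power. -/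
theorem SNeuMem.exists_bound_rpow {G : ℝ → ℝ → ℝ} (hG : SNeuMem G) {T δ : ℝ} (hT : 0 ≤ T)
    (hδ : δ ≤ 0) :
    ∃ K : ℝ, 0 ≤ K ∧ ∀ t ∈ Set.Icc 0 T, G t 0 = 0 ∧ ∀ u, u ≠ 0 → |G t u| ≤ K * |u| ^ δ := by
  obtain ⟨k, a, b, hb, ha, hGa⟩ := hG
  choose K hK using fun j => (ha j).2.1.exists_bound_of_continuous (ha j).1.continuous
  choose M hM0 hM using fun j => (ha j).2.1.exists_pos_le_norm
  have hK0 : ∀ j, 0 ≤ K j := fun j => (norm_nonneg _).trans (hK j 0)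
  refine ⟨∑ j ∈ Finset.range (k + 1), (K j * M j ^ (-δ)) * T ^ j,
    Finset.sum_nonneg fun j _ => mul_nonneg
      (mul_nonneg (hK0 j) (Real.rpow_nonneg (hM0 j).le _)) (pow_nonneg hT j),
    fun t ht => ⟨?_, fun u hu => ?_⟩⟩
  · rw [hGa]
    exact Finset.sum_eq_zero fun j _ => by rw [(ha j).2.2 0 (by simpa using hb.le), zero_mul]
  · rw [hGa]
    refine abs_sum_mul_pow_le ht (k + 1) fun j => ?_
    have hu' : 0 < |u| := abs_pos.mpr hu
    have hM' : 0 ≤ M j ^ (-δ) := Real.rpow_nonneg (hM0 j).le _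
    rcases le_total (M j) |u| with h | h
    · rw [hM j u h, abs_zero]
      exact mul_nonneg (mul_nonneg (hK0 j) hM') (Real.rpow_nonneg hu'.le _)
    · have h1 : 1 ≤ M j ^ (-δ) * |u| ^ δ := by
        calc (1 : ℝ) = M j ^ (-δ) * M j ^ δ := by rw [← Real.rpow_add (hM0 j)]; simp
          _ ≤ M j ^ (-δ) * |u| ^ δ :=
            mul_le_mul_of_nonneg_left (Real.rpow_le_rpow_of_nonpos hu' h hδ) hM'
      calc |a j u| ≤ K j * 1 := by simpa using hK j u
        _ ≤ K j * (M j ^ (-δ) * |u| ^ δ) := mul_le_mul_of_nonneg_left h1 (hK0 j)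
        _ = K j * M j ^ (-δ) * |u| ^ δ := by ring

theorem le_mul_rpow_of_le_of_le_mul {A K d δ : ℝ} (hd : 0 < d) (hK : 0 ≤ K) (hδ0 : 0 ≤ δ)
    (hδ1 : δ ≤ 1) (h1 : A ≤ K) (h2 : A ≤ K * d) : A ≤ K * d ^ δ := by
  rcases le_total d 1 with h | h
  · refine h2.trans (mul_le_mul_of_nonneg_left ?_ hK)
    simpa using Real.rpow_le_rpow_of_exponent_ge hd h hδ1
  · refine h1.trans ?_
    simpa using mul_le_mul_of_nonneg_left (Real.one_le_rpow h hδ0) hK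

/-- Functions in `S_Rob` that are continuous at the origin are Hölder across the origin. -/
theorem SRobMem.exists_holder_crossing {G : ℝ → ℝ → ℝ} (hG : SRobMem G) {T δ : ℝ} (hT : 0 ≤ T)
    (hcont : ∀ t ∈ Set.Icc (0 : ℝ) T, Tendsto (fun u => G t u) (𝓝[<] (0 : ℝ)) (𝓝 (G t 0)))
    (hδ0 : 0 ≤ δ) (hδ1 : δ ≤ 1) :
    ∃ K : ℝ, 0 ≤ K ∧ ∀ t ∈ Set.Icc 0 T, ∀ u v, u < 0 → 0 ≤ v →
      |G t v - G t u| ≤ K * |v - u| ^ δ := by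
  obtain ⟨Gm, Gp, hm, hp, hGe⟩ := hG
  obtain ⟨K, hK0, hK⟩ := hm.exists_bound_lipschitz hT
  obtain ⟨L, hL0, hL⟩ := hp.exists_bound_lipschitz hT
  refine ⟨K + L, add_nonneg hK0 hL0, fun t ht u v hu hv => ?_⟩
  have hmc : Continuous (Gm t) :=
    (LipschitzWith.of_dist_le_mul (K := ⟨K, hK0⟩) fun x y => by
      exact (hK t ht).2 y x).continuous
  have h0 : Gm t 0 = Gp t 0 := by
    have h1 : Tendsto (fun u => G t u) (𝓝[<] (0 : ℝ)) (𝓝 (Gm t 0)) := by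
      refine ((hmc.tendsto 0).mono_left nhdsWithin_le_nhds).congr' ?_
      filter_upwards [self_mem_nhdsWithin] with u hu
      rw [hGe, if_pos (Set.mem_Iio.mp hu)]
    have h2 := tendsto_nhds_unique h1 (hcont t ht)
    rwa [hGe, if_neg (lt_irrefl _)] at h2
  rw [hGe, hGe, if_neg (not_lt.mpr hv), if_pos hu]
  have hd : |v - u| = v - u := abs_of_pos (by linarith)
  refine le_mul_rpow_of_le_of_le_mul (by rw [hd]; linarith) (add_nonneg hK0 hL0) hδ0 hδ1 ?_ ?_
  · have h1 := abs_sub (Gp t v) (Gm t u)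
    linarith [(hK t ht).1 u, (hL t ht).1 v]
  · have h1 := (hL t ht).2 0 v
    have h2 := (hK t ht).2 u 0
    rw [sub_zero, abs_of_nonneg hv] at h1
    rw [zero_sub, abs_of_pos (neg_pos.mpr hu), h0] at h2
    have h3 := abs_sub_le (Gp t v) (Gp t 0) (Gm t u)
    rw [hd]
    nlinarith [mul_nonneg hK0 hv, mul_nonneg hL0 (neg_pos.mpr hu).le]

/-- A product-type summable domination of the crossing terms forces the limit to vanish. -/
theorem tendsto_crossing_sum_of_bound {γ c T β η C : ℝ} {G : ℝ → ℝ → ℝ} (hη : 0 < η)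
    (hηβ : 2 * η < β) (hC : 0 ≤ C)
    (hb : ∀ n : ℕ, 1 ≤ n → ∀ s ∈ Set.Icc (0 : ℝ) T, ∀ x y : ℤ,
      (x < 0 ∧ 0 ≤ y) ∨ (y < 0 ∧ 0 ≤ x) →
      |(G s ((y : ℝ) / n) - G s ((x : ℝ) / n)) * transP c γ (y - x)| ≤
        C * (n : ℝ) ^ (-(γ - 1 - 2 * η)) *
          ((1 + |(x : ℝ)|) ^ (-(1 + η)) * (1 + |(y : ℝ)|) ^ (-(1 + η)))) :
    Tendsto (fun n : ℕ => (n : ℝ)⁻¹ * ∑' x : ℤ,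
        ⨆ s ∈ Set.Icc (0 : ℝ) T,
          |(n : ℝ) ^ (γ - β) * ∑' y : ℤ,
            (if (x < 0 ∧ 0 ≤ y) ∨ (y < 0 ∧ 0 ≤ x) then
              (G s ((y : ℝ) / n) - G s ((x : ℝ) / n)) * transP c γ (y - x) else 0)|)
      atTop (𝓝 0) := by
  set w : ℤ → ℝ := fun x => (1 + |(x : ℝ)|) ^ (-(1 + η)) with hw
  have hw0 : ∀ x, 0 ≤ w x := fun x => Real.rpow_nonneg (by positivity) _
  have hws : HasSum w (∑' x, w x) := (summable_one_add_abs_int_rpow (by linarith)).hasSum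
  set W := ∑' x, w x
  have hW : 0 ≤ W := tsum_nonneg hw0
  have hlim : Tendsto (fun n : ℕ => (C * W * W) * (n : ℝ) ^ (-(β - 2 * η))) atTop (𝓝 0) := by
    simpa using ((tendsto_rpow_neg_atTop (by linarith : 0 < β - 2 * η)).comp
      tendsto_natCast_atTop_atTop).const_mul (C * W * W)
  refine squeeze_zero_norm' ?_ hlim
  filter_upwards [eventually_ge_atTop 1] with n hn
  have hn0 : (0 : ℝ) < n := by exact_mod_cast hn
  set E : ℝ := C * (n : ℝ) ^ (-(γ - 1 - 2 * η)) with hE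
  have hE0 : 0 ≤ E := by positivity
  have hP : 0 ≤ (n : ℝ) ^ (γ - β) := by positivity
  have hinner : ∀ s ∈ Set.Icc (0 : ℝ) T, ∀ x : ℤ,
      |(n : ℝ) ^ (γ - β) * ∑' y : ℤ, (if (x < 0 ∧ 0 ≤ y) ∨ (y < 0 ∧ 0 ≤ x) then
        (G s ((y : ℝ) / n) - G s ((x : ℝ) / n)) * transP c γ (y - x) else 0)| ≤
      ((n : ℝ) ^ (γ - β) * (E * W)) * w x := by
    intro s hs x
    rw [abs_mul, abs_of_nonneg hP]
    have h := tsum_of_norm_bounded (hws.mul_left (E * w x))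
      (f := fun y : ℤ => if (x < 0 ∧ 0 ≤ y) ∨ (y < 0 ∧ 0 ≤ x) then
        (G s ((y : ℝ) / n) - G s ((x : ℝ) / n)) * transP c γ (y - x) else 0) fun y => by
        split_ifs with hxy
        · exact (hb n hn s hs x y hxy).trans_eq (mul_assoc _ _ _).symm
        · rw [norm_zero]
          exact mul_nonneg (mul_nonneg hE0 (hw0 x)) (hw0 y)
    calc _ ≤ (n : ℝ) ^ (γ - β) * (E * w x * W) := mul_le_mul_of_nonneg_left h hP
      _ = _ := by ring
  rw [norm_mul, Real.norm_of_nonneg (inv_nonneg.mpr hn0.le)]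
  refine (mul_le_mul_of_nonneg_left (tsum_of_norm_bounded
    (hws.mul_left ((n : ℝ) ^ (γ - β) * (E * W))) fun x => ?_) (inv_nonneg.mpr hn0.le)).trans_eq ?_
  · rw [Real.norm_of_nonneg
      (Real.iSup_nonneg fun s => Real.iSup_nonneg fun _ => abs_nonneg _)]
    have h0 : 0 ≤ (n : ℝ) ^ (γ - β) * (E * W) * w x := by
      have := hw0 x
      positivity
    exact Real.iSup_le (fun s => Real.iSup_le (fun hs => hinner s hs x) h0) h0
  · rw [hE, ← Real.rpow_neg_one, show -(β - 2 * η) = -1 + ((γ - β) + -(γ - 1 - 2 * η)) by ring,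
      Real.rpow_add hn0, Real.rpow_add hn0]
    ring

theorem abs_mul_transP_le_of_holder {γ c η K δ g : ℝ} (hc : 0 < c) (hη : 0 < η) (hK : 0 ≤ K)
    (hδ : δ = γ - 1 - 2 * η) {n : ℕ} (hn : 1 ≤ n) {x y : ℤ}
    (h : (x < 0 ∧ 0 ≤ y) ∨ (y < 0 ∧ 0 ≤ x))
    (hg : |g| ≤ K * |(y : ℝ) / n - (x : ℝ) / n| ^ δ) :
    |g * transP c γ (y - x)| ≤ (K * c * 2 ^ ((1 + η) + (1 + η))) * (n : ℝ) ^ (-δ) *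
      ((1 + |(x : ℝ)|) ^ (-(1 + η)) * (1 + |(y : ℝ)|) ^ (-(1 + η))) := by
  have hn0 : (0 : ℝ) < n := by exact_mod_cast hn
  obtain ⟨hxy, h1⟩ := abs_add_abs_eq_abs_sub_of_crossing h
  rw [transP_of_crossing c γ h]
  rw [← sub_div, abs_div, abs_of_pos hn0, Real.div_rpow (abs_nonneg _) hn0.le] at hg
  set D := |(y : ℝ) - x|
  have hx := abs_nonneg (x : ℝ)
  have hy := abs_nonneg (y : ℝ)
  have hD : 0 < D := by linarith
  rw [abs_mul, abs_of_nonneg (by positivity : 0 ≤ c * D ^ (-γ - 1))]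
  calc |g| * (c * D ^ (-γ - 1)) ≤ (K * (D ^ δ / (n : ℝ) ^ δ)) * (c * D ^ (-γ - 1)) := by gcongr
    _ = K * c * (n : ℝ) ^ (-δ) * D ^ (-((1 + η) + (1 + η))) := by
        rw [show -((1 + η) + (1 + η)) = δ + (-γ - 1) by rw [hδ]; ring, Real.rpow_add hD,
          Real.rpow_neg hn0.le]
        ring
    _ ≤ K * c * (n : ℝ) ^ (-δ) * (2 ^ ((1 + η) + (1 + η)) *
          ((1 + |(x : ℝ)|) ^ (-(1 + η)) * (1 + |(y : ℝ)|) ^ (-(1 + η)))) := by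
        gcongr
        exact rpow_neg_add_le (by linarith) (by linarith) (by linarith) (by linarith)
          (by linarith) (by linarith)
    _ = _ := by ring

theorem abs_mul_transP_le_of_rpow {γ c η K δ g : ℝ} (hc : 0 < c) (hη : 0 < η) (hηγ : η ≤ γ)
    (hK : 0 ≤ K) (hδ : δ = γ - 1 - 2 * η) (hδ0 : δ ≤ 0) {n : ℕ} (hn : 1 ≤ n) {x y : ℤ}
    (h : (x < 0 ∧ 0 ≤ y) ∨ (y < 0 ∧ 0 ≤ x)) (hg0 : x = 0 → g = 0)
    (hg : x ≠ 0 → |g| ≤ K * |(x : ℝ) / n| ^ δ) :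
    |g * transP c γ (y - x)| ≤ (K * c * (2 ^ (-δ) * 2 ^ ((γ - η) + (1 + η)))) * (n : ℝ) ^ (-δ) *
      ((1 + |(x : ℝ)|) ^ (-(1 + η)) * (1 + |(y : ℝ)|) ^ (-(1 + η))) := by
  have hn0 : (0 : ℝ) < n := by exact_mod_cast hn
  rcases eq_or_ne x 0 with hx0 | hx0
  · rw [hg0 hx0, zero_mul, abs_zero]
    positivity
  replace hg := hg hx0
  obtain ⟨hxy, h1⟩ := abs_add_abs_eq_abs_sub_of_crossing h
  rw [transP_of_crossing c γ h]
  rw [abs_div, abs_of_pos hn0, Real.div_rpow (abs_nonneg _) hn0.le] at hg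
  set D := |(y : ℝ) - x|
  have hx : (1 : ℝ) ≤ |(x : ℝ)| := by exact_mod_cast Int.one_le_abs hx0
  have hy := abs_nonneg (y : ℝ)
  have hD : 0 < D := by linarith
  have hX := rpow_neg_le_of_le_two_mul (A := 1 + |(x : ℝ)|) (D := |(x : ℝ)|) (p := -δ)
    (by linarith) (by linarith) (by linarith)
  rw [neg_neg] at hX
  have hK' := rpow_neg_add_le (A := 1 + |(x : ℝ)|) (B := 1 + |(y : ℝ)|) (D := D)
    (p := γ - η) (q := 1 + η) (by linarith) (by linarith) (by linarith) (by linarith)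
    (by linarith) (by linarith)
  rw [abs_mul, abs_of_nonneg (by positivity : 0 ≤ c * D ^ (-γ - 1))]
  calc |g| * (c * D ^ (-γ - 1))
      ≤ (K * (|(x : ℝ)| ^ δ / (n : ℝ) ^ δ)) * (c * D ^ (-γ - 1)) := by gcongr
    _ = K * c * (n : ℝ) ^ (-δ) * (|(x : ℝ)| ^ δ * D ^ (-((γ - η) + (1 + η)))) := by
        rw [show -((γ - η) + (1 + η)) = -γ - 1 by ring, Real.rpow_neg hn0.le]
        ring
    _ ≤ K * c * (n : ℝ) ^ (-δ) * ((2 ^ (-δ) * (1 + |(x : ℝ)|) ^ δ) *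
          (2 ^ ((γ - η) + (1 + η)) *
            ((1 + |(x : ℝ)|) ^ (-(γ - η)) * (1 + |(y : ℝ)|) ^ (-(1 + η))))) := by
        gcongr
    _ = _ := by
        rw [show (1 + |(x : ℝ)|) ^ (-(1 + η)) =
            (1 + |(x : ℝ)|) ^ δ * (1 + |(x : ℝ)|) ^ (-(γ - η)) by
          rw [← Real.rpow_add (by linarith), hδ]
          ring_nf]
        ring

theorem transP_sub_comm (c γ : ℝ) (x y : ℤ) : transP c γ (y - x) = transP c γ (x - y) := by
  simp only [transP, sub_eq_zero, eq_comm (a := y), Int.cast_sub, abs_sub_comm (y : ℝ)]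

theorem stmt15 (γ c T β : ℝ) (hγ : γ ∈ Set.Ioo (0 : ℝ) 2) (hc : 0 < c)
    (hprob : HasSum (transP c γ) 1) (hT : 0 < T) (hβ : 0 < β)
    (G : ℝ → ℝ → ℝ)
    -- if γ ∈ (0,1] then G ∈ S_Neu; if γ ∈ (1,2) then G ∈ S_Rob with G₋(t,0) = G₊(t,0),
    -- i.e. G(t,·) is (left-)continuous at the origin
    (hG : (γ ≤ 1 ∧ SNeuMem G) ∨
      (1 < γ ∧ SRobMem G ∧
        ∀ t ∈ Set.Icc (0 : ℝ) T, Tendsto (fun u => G t u) (𝓝[<] (0 : ℝ)) (𝓝 (G t 0)))) :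
    Tendsto (fun n : ℕ => (n : ℝ)⁻¹ * ∑' x : ℤ,
        ⨆ s ∈ Set.Icc (0 : ℝ) T,
          |(n : ℝ) ^ (γ - β) * ∑' y : ℤ,
            (if (x < 0 ∧ 0 ≤ y) ∨ (y < 0 ∧ 0 ≤ x) then
              (G s ((y : ℝ) / n) - G s ((x : ℝ) / n)) * transP c γ (y - x) else 0)|)
      atTop (𝓝 0) := by
  rcases hG with ⟨hγ1, hG⟩ | ⟨hγ1, hG, hcont⟩
  · obtain ⟨η, hη, hη'⟩ := exists_between (lt_min (half_pos hβ) hγ.1)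
    have hηβ := hη'.trans_le (min_le_left _ _)
    have hηγ := hη'.trans_le (min_le_right _ _)
    obtain ⟨K, hK, hKG⟩ := hG.exists_bound_rpow (δ := γ - 1 - 2 * η) hT.le (by linarith)
    refine tendsto_crossing_sum_of_bound (η := η) hη (by linarith)
      (C := 2 * (K * c * (2 ^ (-(γ - 1 - 2 * η)) * 2 ^ ((γ - η) + (1 + η))))) (by positivity)
      fun n hn s hs x y h => ?_
    have hn0 : (n : ℝ) ≠ 0 := by exact_mod_cast (by omega : n ≠ 0)
    have bound : ∀ x y : ℤ, (x < 0 ∧ 0 ≤ y) ∨ (y < 0 ∧ 0 ≤ x) → _ := fun x y h =>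
      abs_mul_transP_le_of_rpow (g := G s ((x : ℝ) / n)) hc hη hηγ.le hK rfl (by linarith) hn h
        (fun hx => by simpa [hx] using (hKG s hs).1)
        (fun hx => (hKG s hs).2 _ (div_ne_zero (by exact_mod_cast hx) hn0))
    have hx := bound x y h
    have hy := bound y x h.symm
    rw [transP_sub_comm] at hy
    rw [sub_mul]
    refine (abs_sub _ _).trans ((add_le_add hy hx).trans_eq ?_)
    ring
  · obtain ⟨η, hη, hη'⟩ := exists_between (lt_min (half_pos hβ) (half_pos (sub_pos.mpr hγ1)))
    have hηβ := hη'.trans_le (min_le_left _ _)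
    have hηγ := hη'.trans_le (min_le_right _ _)
    obtain ⟨K, hK, hKG⟩ := hG.exists_holder_crossing (δ := γ - 1 - 2 * η) hT.le hcont
      (by linarith) (by linarith [hγ.2])
    refine tendsto_crossing_sum_of_bound (η := η) hη (by linarith)
      (C := K * c * 2 ^ ((1 + η) + (1 + η))) (by positivity) fun n hn s hs x y h => ?_
    have hn0 : (0 : ℝ) < n := by exact_mod_cast hn
    refine abs_mul_transP_le_of_holder hc hη hK rfl hn h ?_
    have neg : ∀ z : ℤ, z < 0 → (z : ℝ) / n < 0 := fun z hz =>
      div_neg_of_neg_of_pos (by exact_mod_cast hz) hn0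
    have nonneg : ∀ z : ℤ, 0 ≤ z → 0 ≤ (z : ℝ) / n := fun z hz =>
      div_nonneg (by exact_mod_cast hz) hn0.le
    rcases h with ⟨hx, hy⟩ | ⟨hy, hx⟩
    · exact hKG s hs _ _ (neg x hx) (nonneg y hy)
    · rw [abs_sub_comm (G s _), abs_sub_comm ((y : ℝ) / n)]
      exact hKG s hs _ _ (neg y hy) (nonneg x hx)
end

section
/- Let γ ∈ (0,2), T > 0 and G ∈ S_Dif. Then there exists a constant C > 0 (depending on G, γ and T but not on n) such that for every n ≥ 1, n^{γ−2} ∑_{x∈ℤ} ∑_{y∈ℤ} sup_{s∈[0,T]} (G(s, y/n) − G(s, x/n))² p(y−x) ≤ C · max{ n^{γ−2}, n^{−1} }. -/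
open MeasureTheory Filter Set Topology

theorem min_mul_rpow_sub_one_le_sub {β x : ℝ} (hβ : 0 < β) (hx : 1 ≤ x) :
    min β 1 * x ^ (β - 1) ≤ x ^ β - (x - 1) ^ β := by
  have hx0 : 0 < x := by linarith
  have ht : x⁻¹ ≤ 1 := inv_le_one_of_one_le₀ hx
  have ht0 : 0 < x⁻¹ := inv_pos.2 hx0
  have hfac : x - 1 = x * (1 + -x⁻¹) := by field_simp; ring
  have hbern : (1 + -x⁻¹) ^ β ≤ 1 + min β 1 * (-x⁻¹) :=
    (Real.rpow_le_rpow_of_exponent_ge' (by linarith) (by linarith)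
      (le_min hβ.le zero_le_one) (min_le_left _ _)).trans
      (rpow_one_add_le_one_add_mul_self (by linarith) (le_min hβ.le zero_le_one)
        (min_le_right _ _))
  have hmul := mul_le_mul_of_nonneg_left hbern (Real.rpow_nonneg hx0.le β)
  rw [hfac, Real.mul_rpow hx0.le (by linarith), Real.rpow_sub_one hx0.ne', div_eq_mul_inv]
  nlinarith

theorem mul_rpow_neg_sub_one_le_sub {γ x : ℝ} (hγ : 0 < γ) (hx : 1 < x) :
    γ * x ^ (-γ - 1) ≤ (x - 1) ^ (-γ) - x ^ (-γ) := by
  have hx0 : 0 < x := by linarith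
  have ht : x⁻¹ < 1 := inv_lt_one_of_one_lt₀ hx
  have hfac : x - 1 = x * (1 - x⁻¹) := by field_simp
  have hexp : 1 - x⁻¹ ≤ Real.exp (-x⁻¹) := by
    have := Real.add_one_le_exp (-x⁻¹); linarith
  have hbern : 1 + γ * x⁻¹ ≤ (1 - x⁻¹) ^ (-γ) := by
    calc 1 + γ * x⁻¹ ≤ Real.exp (γ * x⁻¹) := by
          have := Real.add_one_le_exp (γ * x⁻¹); linarith
      _ = Real.exp (-x⁻¹) ^ (-γ) := by rw [← Real.exp_mul]; ring_nf
      _ ≤ (1 - x⁻¹) ^ (-γ) :=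
          Real.rpow_le_rpow_of_nonpos (by linarith) hexp (by linarith)
  have hmul := mul_le_mul_of_nonneg_left hbern (Real.rpow_nonneg hx0.le (-γ))
  rw [hfac, Real.mul_rpow hx0.le (by linarith), Real.rpow_sub_one hx0.ne', div_eq_mul_inv]
  nlinarith

theorem sum_range_min_sq_mul_rpow_le_of_le {γ : ℝ} (hγ : γ < 2) {n : ℕ} (hn : 1 ≤ n) {N : ℕ}
    (hN : N ≤ n) :
    ∑ i ∈ Finset.range N, (min 1 (((i : ℝ) + 1) / n)) ^ 2 * ((i : ℝ) + 1) ^ (-γ - 1)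
      ≤ (min (2 - γ) 1)⁻¹ * ((N : ℝ) ^ (2 - γ) / (n : ℝ) ^ 2) := by
  have hn0 : (0 : ℝ) < n := by exact_mod_cast hn
  have hm : 0 < min (2 - γ) 1 := lt_min (by linarith) one_pos
  induction N with
  | zero => simp only [Finset.range_zero, Finset.sum_empty]; positivity
  | succ N ih =>
    rw [Finset.sum_range_succ]
    have hstep := min_mul_rpow_sub_one_le_sub (β := 2 - γ) (x := (N : ℝ) + 1) (by linarith)
      (by have := N.cast_nonneg (α := ℝ); linarith)
    have hx : (0 : ℝ) < (N : ℝ) + 1 := by positivity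
    have hle : ((N : ℝ) + 1) / n ≤ 1 := by
      rw [div_le_one hn0]; exact_mod_cast hN
    have hterm : (((N : ℝ) + 1) / n) ^ 2 * ((N : ℝ) + 1) ^ (-γ - 1)
        = ((N : ℝ) + 1) ^ (2 - γ - 1) / (n : ℝ) ^ 2 := by
      rw [show 2 - γ - 1 = 2 + (-γ - 1) by ring, Real.rpow_add hx, Real.rpow_two]
      ring
    rw [min_eq_right hle, hterm]
    have hbound : ((N : ℝ) + 1) ^ (2 - γ - 1)
        ≤ (min (2 - γ) 1)⁻¹ * (((N : ℝ) + 1) ^ (2 - γ) - (N : ℝ) ^ (2 - γ)) := by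
      rw [inv_mul_eq_div, le_div_iff₀ hm, mul_comm]
      simpa using hstep
    have hdiv := div_le_div_of_nonneg_right hbound (sq_nonneg (n : ℝ))
    have := ih (by omega)
    push_cast
    calc _ ≤ _ := add_le_add this hdiv
      _ = _ := by ring

theorem sum_range_min_sq_mul_rpow_le {γ : ℝ} (hγ : γ ∈ Set.Ioo (0 : ℝ) 2) {n : ℕ} (hn : 1 ≤ n)
    (N : ℕ) :
    ∑ i ∈ Finset.range N, (min 1 (((i : ℝ) + 1) / n)) ^ 2 * ((i : ℝ) + 1) ^ (-γ - 1)
      ≤ ((min (2 - γ) 1)⁻¹ + γ⁻¹) * (n : ℝ) ^ (-γ) := by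
  obtain ⟨hγ0, hγ2⟩ := hγ
  have hn0 : (0 : ℝ) < n := by exact_mod_cast hn
  have hnn : (n : ℝ) ^ (2 - γ) / (n : ℝ) ^ 2 = (n : ℝ) ^ (-γ) := by
    rw [show 2 - γ = 2 + -γ by ring, Real.rpow_add hn0, Real.rpow_two]
    field_simp
  have hlarge : ∀ N, n ≤ N →
      ∑ i ∈ Finset.range N, (min 1 (((i : ℝ) + 1) / n)) ^ 2 * ((i : ℝ) + 1) ^ (-γ - 1)
      ≤ (min (2 - γ) 1)⁻¹ * (n : ℝ) ^ (-γ) + γ⁻¹ * ((n : ℝ) ^ (-γ) - (N : ℝ) ^ (-γ)) := by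
    intro N hN
    induction N, hN using Nat.le_induction with
    | base => simpa [hnn] using sum_range_min_sq_mul_rpow_le_of_le hγ2 hn le_rfl
    | succ N hN ih =>
      rw [Finset.sum_range_succ]
      have hN0 : (0 : ℝ) < N := by exact_mod_cast hn.trans hN
      have hstep := mul_rpow_neg_sub_one_le_sub (x := (N : ℝ) + 1) hγ0 (by linarith)
      have hle : (1 : ℝ) ≤ ((N : ℝ) + 1) / n := by
        rw [one_le_div hn0]; exact_mod_cast hN.trans N.le_succ
      have hbound : ((N : ℝ) + 1) ^ (-γ - 1)
          ≤ γ⁻¹ * ((N : ℝ) ^ (-γ) - ((N : ℝ) + 1) ^ (-γ)) := by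
        rw [inv_mul_eq_div, le_div_iff₀ hγ0, mul_comm]
        simpa using hstep
      rw [min_eq_left hle]
      push_cast
      linarith
  have hmono : ∑ i ∈ Finset.range N,
        (min 1 (((i : ℝ) + 1) / n)) ^ 2 * ((i : ℝ) + 1) ^ (-γ - 1)
      ≤ ∑ i ∈ Finset.range (max n N),
        (min 1 (((i : ℝ) + 1) / n)) ^ 2 * ((i : ℝ) + 1) ^ (-γ - 1) :=
    Finset.sum_le_sum_of_subset_of_nonneg
      (Finset.range_mono (le_max_right _ _)) (fun i _ _ => by positivity)
  have h := hlarge (max n N) (le_max_left _ _)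
  have hpos : 0 ≤ γ⁻¹ * ((max n N : ℕ) : ℝ) ^ (-γ) := by positivity
  linarith

/-- Truncated second moment of the jump law at scale `n`. -/
theorem exists_hasSum_min_sq_mul_transP {γ c : ℝ} (hγ : γ ∈ Set.Ioo (0 : ℝ) 2) (hc : 0 < c)
    {n : ℕ} (hn : 1 ≤ n) :
    ∃ W : ℝ, W ≤ 2 * c * ((min (2 - γ) 1)⁻¹ + γ⁻¹) * (n : ℝ) ^ (-γ) ∧
      HasSum (fun z : ℤ => (min 1 |(z : ℝ) / n|) ^ 2 * transP c γ z) W := by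
  set v : ℕ → ℝ := fun i => (min 1 (((i : ℝ) + 1) / n)) ^ 2 * ((i : ℝ) + 1) ^ (-γ - 1) with hv
  have hv0 : ∀ i, 0 ≤ v i := fun i => by simp only [hv]; positivity
  have hsum := summable_of_sum_range_le hv0 (sum_range_min_sq_mul_rpow_le hγ hn)
  have hle := Real.tsum_le_of_sum_range_le hv0 (sum_range_min_sq_mul_rpow_le hγ hn)
  have hcv := hsum.hasSum.mul_left c
  have habs : ∀ i : ℕ, |(i : ℝ) + 1| = (i : ℝ) + 1 := fun i => abs_of_nonneg (by positivity)
  set f : ℤ → ℝ := fun z => (min 1 |(z : ℝ) / n|) ^ 2 * transP c γ z with hf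
  have hf_pos : ∀ i : ℕ, f (i + 1) = c * v i := fun i => by
    have hne : (i : ℤ) + 1 ≠ 0 := by omega
    simp only [hf, transP, hne, if_false, hv]
    push_cast
    rw [abs_div, habs, Nat.abs_cast]
    ring
  have hf_neg : ∀ i : ℕ, f (-(i + 1)) = c * v i := fun i => by
    have hne : -((i : ℤ) + 1) ≠ 0 := by omega
    simp only [hf, transP, hne, if_false, hv]
    push_cast
    rw [abs_div, abs_neg, habs, Nat.abs_cast]
    ring
  have hf_zero : f 0 = 0 := by simp [hf, transP]
  have hpos : HasSum (fun i : ℕ => f (i + 1)) (c * ∑' i, v i) := by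
    simpa only [hf_pos] using hcv
  have hneg : HasSum (fun i : ℕ => f (-(i + 1))) (c * ∑' i, v i) := by
    simpa only [hf_neg] using hcv
  refine ⟨_, ?_, hpos.of_add_one_of_neg_add_one hneg⟩
  have := mul_le_mul_of_nonneg_left hle hc.le
  rw [hf_zero]
  linarith

theorem exists_abs_sub_le_mul_min {a : ℝ → ℝ} (ha : ContDiff ℝ (⊤ : ℕ∞) a)
    (hs : HasCompactSupport a) :
    ∃ B : ℝ, 0 ≤ B ∧ ∀ u v, |a u - a v| ≤ B * min 1 |u - v| := by
  obtain ⟨L, hL⟩ := ha.lipschitzWith_of_hasCompactSupport hs (by simp)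
  obtain ⟨M, hM⟩ := hs.exists_bound_of_continuous ha.continuous
  have hM0 : 0 ≤ M := (norm_nonneg _).trans (hM 0)
  refine ⟨max L (2 * M), le_max_of_le_left L.2, fun u v => ?_⟩
  rcases le_total 1 |u - v| with h | h
  · rw [min_eq_left h, mul_one]
    refine le_max_of_le_right ((abs_sub _ _).trans ?_)
    have h1 := hM u
    have h2 := hM v
    rw [Real.norm_eq_abs] at h1 h2
    linarith
  · rw [min_eq_right h]
    have := hL.dist_le_mul u v
    rw [Real.dist_eq, Real.dist_eq] at this
    exact this.trans (mul_le_mul_of_nonneg_right (le_max_left _ _) (abs_nonneg _))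

theorem SDifMem.exists_abs_sub_le {G : ℝ → ℝ → ℝ} (hG : SDifMem G) (T : ℝ) :
    ∃ B : ℝ, 0 ≤ B ∧ ∀ s ∈ Set.Icc (0 : ℝ) T, ∀ u v,
      |G s u - G s v| ≤ B * min 1 |u - v| := by
  obtain ⟨k, a, ha, hGa⟩ := hG
  choose B hB0 hB using fun j => exists_abs_sub_le_mul_min (ha j).1 (ha j).2
  by_cases hT : 0 ≤ T
  · refine ⟨∑ j ∈ Finset.range (k + 1), B j * T ^ j,
      Finset.sum_nonneg fun j _ => mul_nonneg (hB0 j) (pow_nonneg hT j), fun s hs u v => ?_⟩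
    rw [hGa, hGa, ← Finset.sum_sub_distrib, Finset.sum_mul]
    refine (Finset.abs_sum_le_sum_abs _ _).trans (Finset.sum_le_sum fun j _ => ?_)
    rw [← sub_mul, abs_mul, abs_of_nonneg (pow_nonneg hs.1 j)]
    calc |a j u - a j v| * s ^ j ≤ (B j * min 1 |u - v|) * T ^ j :=
          mul_le_mul (hB j u v) (pow_le_pow_left₀ hs.1 hs.2 j) (pow_nonneg hs.1 j)
            (mul_nonneg (hB0 j) (by positivity))
      _ = _ := by ring
  · exact ⟨0, le_rfl, fun s hs => absurd (hs.1.trans hs.2) hT⟩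

theorem SDifMem.exists_forall_eq_zero {G : ℝ → ℝ → ℝ} (hG : SDifMem G) :
    ∃ K : ℕ, ∀ s u, (K : ℝ) < |u| → G s u = 0 := by
  obtain ⟨k, a, ha, hGa⟩ := hG
  have hR : ∀ j, ∃ R : ℕ, ∀ u, (R : ℝ) < |u| → a j u = 0 := fun j => by
    obtain ⟨r, hr⟩ := (ha j).2.isCompact.isBounded.exists_norm_le
    obtain ⟨R, hrR⟩ := exists_nat_ge r
    refine ⟨R, fun u hu => image_eq_zero_of_notMem_tsupport fun hmem => ?_⟩
    have := hr u hmem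
    rw [Real.norm_eq_abs] at this
    linarith
  choose R hR using hR
  refine ⟨(Finset.range (k + 1)).sup R, fun s u hu => ?_⟩
  rw [hGa]
  refine Finset.sum_eq_zero fun j hj => ?_
  rw [hR j u (lt_of_le_of_lt (by exact_mod_cast Finset.le_sup hj) hu), zero_mul]

/-- Pairs of integers, at least one of which lies in `S`, weighted by a function of the
difference. -/
theorem hasSum_indicator_add_mul_sub {w : ℤ → ℝ} {W : ℝ} (hw0 : 0 ≤ w) (hw : HasSum w W)
    (S : Finset ℤ) :
    HasSum (fun q : ℤ × ℤ => ((S : Set ℤ).indicator 1 q.1 + (S : Set ℤ).indicator 1 q.2)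
      * w (q.2 - q.1)) (2 * (S.card * W)) := by
  have hS : HasSum ((S : Set ℤ).indicator (1 : ℤ → ℝ)) S.card := by
    have h := hasSum_sum_of_ne_finset_zero (L := .unconditional ℤ) (f := (S : Set ℤ).indicator (1 : ℤ → ℝ)) (s := S)
      (fun b hb => Set.indicator_of_notMem (by simpa using hb) _)
    have hcard : ∑ b ∈ S, (S : Set ℤ).indicator (1 : ℤ → ℝ) b = S.card := by
      rw [Finset.sum_congr rfl fun b hb => Set.indicator_of_mem (Finset.mem_coe.2 hb) _]
      simp
    rwa [hcard] at h
  have hS0 : (0 : ℤ → ℝ) ≤ (S : Set ℤ).indicator (1 : ℤ → ℝ) :=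
    Set.indicator_nonneg fun _ _ => zero_le_one
  have hprod := hS.mul hw (hS.summable.mul_of_nonneg hw.summable hS0 hw0)
  let e₁ : ℤ × ℤ ≃ ℤ × ℤ :=
    ⟨fun q => (q.1, q.2 - q.1), fun q => (q.1, q.2 + q.1), fun q => by simp, fun q => by simp⟩
  let e₂ : ℤ × ℤ ≃ ℤ × ℤ :=
    ⟨fun q => (q.2, q.2 - q.1), fun q => (q.1 - q.2, q.1), fun q => by simp, fun q => by simp⟩
  have h₁ := e₁.hasSum_iff.2 hprod
  have h₂ := e₂.hasSum_iff.2 hprod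
  rw [two_mul]
  refine (h₁.add h₂).congr_fun fun q => ?_
  simp only [Function.comp, e₁, e₂, Equiv.coe_fn_mk, add_mul]

theorem transP_nonneg {c : ℝ} (hc : 0 < c) (γ : ℝ) (z : ℤ) : 0 ≤ transP c γ z := by
  unfold transP
  split_ifs
  · exact le_rfl
  · positivity

theorem stmt16 (γ c T : ℝ) (hγ : γ ∈ Set.Ioo (0 : ℝ) 2) (hc : 0 < c)
    (hprob : HasSum (transP c γ) 1) (hT : 0 < T)
    (G : ℝ → ℝ → ℝ) (hG : SDifMem G) :
    ∃ C : ℝ, 0 < C ∧ ∀ n : ℕ, 1 ≤ n →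
      (n : ℝ) ^ (γ - 2) * ∑' q : ℤ × ℤ,
          (⨆ s ∈ Set.Icc (0 : ℝ) T,
            (G s ((q.2 : ℝ) / n) - G s ((q.1 : ℝ) / n)) ^ 2) * transP c γ (q.2 - q.1)
        ≤ C * max ((n : ℝ) ^ (γ - 2)) ((n : ℝ)⁻¹) := by
  obtain ⟨B, hB0, hB⟩ := hG.exists_abs_sub_le T
  obtain ⟨K, hK⟩ := hG.exists_forall_eq_zero
  set A : ℝ := 2 * c * ((min (2 - γ) 1)⁻¹ + γ⁻¹) with hA
  have hA0 : 0 < A := by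
    have h1 : 0 < min (2 - γ) 1 := lt_min (by linarith [hγ.2]) one_pos
    have h2 := hγ.1
    positivity
  refine ⟨B ^ 2 * (2 * ((2 * K + 1) * A)) + 1, by positivity, fun n hn => ?_⟩
  have hn0 : (0 : ℝ) < n := by exact_mod_cast hn
  obtain ⟨W, hWle, hW⟩ := exists_hasSum_min_sq_mul_transP hγ hc hn
  rw [← hA] at hWle
  set w : ℤ → ℝ := fun z => (min 1 |(z : ℝ) / n|) ^ 2 * transP c γ z with hw
  have hw0 : 0 ≤ w := fun z => mul_nonneg (sq_nonneg _) (transP_nonneg hc γ z)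
  set S : Finset ℤ := Finset.Icc (-((K * n : ℕ) : ℤ)) ((K * n : ℕ) : ℤ) with hS
  have hcard : (S.card : ℝ) ≤ (2 * K + 1) * n := by
    have h : S.card = 2 * (K * n) + 1 := by
      rw [hS, Int.card_Icc]; omega
    have hn1 : (1 : ℝ) ≤ n := by exact_mod_cast hn
    rw [h]
    push_cast
    linarith
  have hout : ∀ s, ∀ x : ℤ, x ∉ S → G s ((x : ℝ) / n) = 0 := fun s x hx => by
    refine hK s _ ?_
    rw [abs_div, Nat.abs_cast, lt_div_iff₀ hn0]
    have h : ((K * n : ℕ) : ℤ) < |x| := by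
      rw [hS, Finset.mem_Icc, ← abs_le, not_le] at hx
      exact hx
    exact_mod_cast h
  have hsum := (hasSum_indicator_add_mul_sub hw0 hW S).mul_left (B ^ 2)
  have hdom : ∀ q : ℤ × ℤ,
      (⨆ s ∈ Set.Icc (0 : ℝ) T, (G s ((q.2 : ℝ) / n) - G s ((q.1 : ℝ) / n)) ^ 2)
          * transP c γ (q.2 - q.1)
        ≤ B ^ 2 * (((S : Set ℤ).indicator 1 q.1 + (S : Set ℤ).indicator 1 q.2)
          * w (q.2 - q.1)) := fun q => by
    set I : ℝ := (S : Set ℤ).indicator 1 q.1 + (S : Set ℤ).indicator 1 q.2 with hI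
    have hI0 : 0 ≤ I := add_nonneg (Set.indicator_nonneg (fun _ _ => zero_le_one) _)
      (Set.indicator_nonneg (fun _ _ => zero_le_one) _)
    have hsup : (⨆ s ∈ Set.Icc (0 : ℝ) T, (G s ((q.2 : ℝ) / n) - G s ((q.1 : ℝ) / n)) ^ 2)
        ≤ B ^ 2 * (I * (min 1 |((q.2 - q.1 : ℤ) : ℝ) / n|) ^ 2) := by
      refine Real.iSup_le (fun s => Real.iSup_le (fun hs => ?_) (by positivity)) (by positivity)
      by_cases hq : q.1 ∉ S ∧ q.2 ∉ S
      · rw [hout s _ hq.1, hout s _ hq.2, sub_zero, zero_pow two_ne_zero]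
        positivity
      · have hI1 : 1 ≤ I := by
          rcases not_and_or.1 hq with h | h <;>
            rw [hI, Set.indicator_of_mem (Finset.mem_coe.2 (not_not.1 h)), Pi.one_apply]
          · exact le_add_of_nonneg_right (Set.indicator_nonneg (fun _ _ => zero_le_one) _)
          · exact le_add_of_nonneg_left (Set.indicator_nonneg (fun _ _ => zero_le_one) _)
        have hb := hB s hs ((q.2 : ℝ) / n) ((q.1 : ℝ) / n)
        rw [← sub_div] at hb
        push_cast
        calc (G s ((q.2 : ℝ) / n) - G s ((q.1 : ℝ) / n)) ^ 2
            = |G s ((q.2 : ℝ) / n) - G s ((q.1 : ℝ) / n)| ^ 2 := (sq_abs _).symm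
          _ ≤ (B * min 1 |((q.2 : ℝ) - q.1) / n|) ^ 2 := pow_le_pow_left₀ (abs_nonneg _) hb 2
          _ = B ^ 2 * (1 * (min 1 |((q.2 : ℝ) - q.1) / n|) ^ 2) := by ring
          _ ≤ _ := by gcongr
    calc _ ≤ _ := mul_le_mul_of_nonneg_right hsup (transP_nonneg hc γ _)
      _ = _ := by simp only [hw]; ring
  have hnonneg : ∀ q : ℤ × ℤ, 0 ≤
      (⨆ s ∈ Set.Icc (0 : ℝ) T, (G s ((q.2 : ℝ) / n) - G s ((q.1 : ℝ) / n)) ^ 2)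
          * transP c γ (q.2 - q.1) := fun q =>
    mul_nonneg (Real.iSup_nonneg fun s => Real.iSup_nonneg fun _ => sq_nonneg _)
      (transP_nonneg hc γ _)
  have htsum := (Summable.of_nonneg_of_le hnonneg hdom hsum.summable).tsum_le_tsum hdom
    hsum.summable
  rw [hsum.tsum_eq] at htsum
  have hcW : (S.card : ℝ) * W ≤ ((2 * K + 1) * n) * (A * (n : ℝ) ^ (-γ)) :=
    mul_le_mul hcard hWle (hW.nonneg hw0) (by positivity)
  have hpow : (n : ℝ) ^ (γ - 2) * (n * (n : ℝ) ^ (-γ)) = (n : ℝ)⁻¹ := by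
    nth_rewrite 2 [← Real.rpow_one (n : ℝ)]
    rw [← Real.rpow_add hn0, ← Real.rpow_add hn0, ← Real.rpow_neg_one]
    ring_nf
  calc _ ≤ (n : ℝ) ^ (γ - 2)
        * (B ^ 2 * (2 * (((2 * K + 1) * n) * (A * (n : ℝ) ^ (-γ))))) := by
        refine mul_le_mul_of_nonneg_left (htsum.trans ?_) (by positivity)
        gcongr
    _ = B ^ 2 * (2 * ((2 * K + 1) * A)) * ((n : ℝ) ^ (γ - 2) * (n * (n : ℝ) ^ (-γ))) := by ring
    _ = B ^ 2 * (2 * ((2 * K + 1) * A)) * (n : ℝ)⁻¹ := by rw [hpow]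
    _ ≤ _ := by
        gcongr
        · linarith
        · exact le_max_right _ _
end

section
/- Let ℓ₀ be a positive even integer, M ≥ 1 an integer, and set ℓ_i := 2^i ℓ₀ for i ≥ 0. For i ∈ {1,…,M}, y ∈ {1,…,ℓ_{i−1}}, j ∈ {1,…,ℓ_{i−1}/2}, define z^i_{0,j}(y) := y, z^i_{1,j}(y) := y + ℓ_{i−1}/2 + j, z^i_{2,j}(y) := y + ℓ_{i−1}. Then the map Φ sending (i, y, j, k), with i ∈ {1,…,M}, y ∈ {1,…,ℓ_{i−1}}, j ∈ {1,…,ℓ_{i−1}/2} and k ∈ {1,2}, to the pair (z^i_{k−1,j}(y), z^i_{k,j}(y)) ∈ ℤ×ℤ is injective. -/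
/-- The intermediate sites used in the moving particle lemma:
`z^i_{0,j}(y) = y`, `z^i_{1,j}(y) = y + ℓ_{i−1}/2 + j`, `z^i_{2,j}(y) = y + ℓ_{i−1}`,
where `ℓ_{i−1} = 2^{i−1} ℓ₀`. -/
def zSite (ℓ₀ i y j : ℕ) : ℕ → ℤ := fun m =>
  if m = 0 then (y : ℤ)
  else if m = 1 then (y : ℤ) + ((2 ^ (i - 1) * ℓ₀) / 2 : ℕ) + (j : ℤ)
  else (y : ℤ) + (2 ^ (i - 1) * ℓ₀ : ℕ)

/-- The map `Φ : (i, y, j, k) ↦ (z^i_{k−1,j}(y), z^i_{k,j}(y))`. -/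
def PhiMap (ℓ₀ : ℕ) (q : ℕ × ℕ × ℕ × ℕ) : ℤ × ℤ :=
  (zSite ℓ₀ q.1 q.2.1 q.2.2.1 (q.2.2.2 - 1), zSite ℓ₀ q.1 q.2.1 q.2.2.1 q.2.2.2)

/-- Distinct dyadic scales differ by a factor of at least two. -/
theorem two_mul_two_pow_mul_le {a b : ℕ} (c : ℕ) (h : a < b) :
    2 * (2 ^ a * c) ≤ 2 ^ b * c := by
  calc 2 * (2 ^ a * c) = 2 ^ (a + 1) * c := by ring
    _ ≤ 2 ^ b * c := Nat.mul_le_mul_right c (Nat.pow_le_pow_right two_pos h)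

theorem stmt19 (ℓ₀ M : ℕ) (hℓ₀ : 0 < ℓ₀) (heven : Even ℓ₀) (hM : 1 ≤ M) :
    Set.InjOn (PhiMap ℓ₀)
      {q : ℕ × ℕ × ℕ × ℕ |
        1 ≤ q.1 ∧ q.1 ≤ M ∧
        1 ≤ q.2.1 ∧ q.2.1 ≤ 2 ^ (q.1 - 1) * ℓ₀ ∧
        1 ≤ q.2.2.1 ∧ q.2.2.1 ≤ (2 ^ (q.1 - 1) * ℓ₀) / 2 ∧
        (q.2.2.2 = 1 ∨ q.2.2.2 = 2)} := by
  rintro ⟨i, y, j, k⟩ ⟨hi, -, hy, hyL, hj, hjL, hk⟩ ⟨i', y', j', k'⟩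
    ⟨hi', -, hy', hyL', hj', hjL', hk'⟩ hΦ
  simp only at hi hy hyL hj hjL hk hi' hy' hyL' hj' hjL' hk'
  have hdvd : 2 ∣ 2 ^ (i - 1) * ℓ₀ := heven.two_dvd.mul_left _
  have hdvd' : 2 ∣ 2 ^ (i' - 1) * ℓ₀ := heven.two_dvd.mul_left _
  have hscale : (i = i' ∧ 2 ^ (i - 1) * ℓ₀ = 2 ^ (i' - 1) * ℓ₀) ∨
      2 * (2 ^ (i - 1) * ℓ₀) ≤ 2 ^ (i' - 1) * ℓ₀ ∨
      2 * (2 ^ (i' - 1) * ℓ₀) ≤ 2 ^ (i - 1) * ℓ₀ := by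
    rcases lt_trichotomy i i' with h | rfl | h
    · exact .inr (.inl (two_mul_two_pow_mul_le ℓ₀ (by omega)))
    · exact .inl ⟨rfl, rfl⟩
    · exact .inr (.inr (two_mul_two_pow_mul_le ℓ₀ (by omega)))
  simp only [PhiMap, zSite, Prod.mk.injEq] at hΦ ⊢
  generalize 2 ^ (i - 1) * ℓ₀ = L at *
  generalize 2 ^ (i' - 1) * ℓ₀ = L' at *
  obtain ⟨h₁, h₂⟩ := hΦ
  rcases hk with rfl | rfl <;> rcases hk' with rfl | rfl <;> norm_num at h₁ h₂ <;> omega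
end
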